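/- arXiv:2106.07979 — 3 statements merged into one kernel-verified Lean document; each statement's English description precedes it below -/
import Mathlib

section
/- Let Ω ⊂ ℝⁿ be open and let φ₁, φ₂, φ₃ ∈ Φ_c(Ω) satisfy φ₁⁻¹(x,t)·φ₂⁻¹(x,t) ≤ φ₃⁻¹(x,t) for all t ≥ 0 and almost every x ∈ Ω. Then the Young-type inequality φ₃(x,st) ≤ max{φ₁(x,s), φ₂(x,t)} ≤ φ₁(x,s) + φ₂(x,t) holds for all s,t > 0 and almost every x ∈ Ω. -/
open MeasureTheory NNReal ENNReal Filter Set

noncomputable section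

/-- `ℝⁿ` with the Euclidean structure. -/
abbrev RSp (n : ℕ) := EuclideanSpace ℝ (Fin n)

variable {n : ℕ}

/-- A cube in `ℝⁿ` with sides parallel to the coordinate axes,
with center `c` and side length `2r`. -/
structure Cube (n : ℕ) where
  c : RSp n
  r : ℝ
  r_pos : 0 < r

/-- The underlying set of a cube. -/
def Cube.set (Q : Cube n) : Set (RSp n) := {y | ∀ i, |y i - Q.c i| ≤ Q.r}

/-- A weak Φ-function on `Ω` (the class `Φ_w(Ω)`). -/
structure IsWeakPhi (Ω : Set (RSp n)) (φ : RSp n → ℝ≥0 → ℝ≥0∞) : Prop where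
  meas : ∀ f : RSp n → ℝ≥0, Measurable f →
    AEMeasurable (fun x => φ x (f x)) (volume.restrict Ω)
  mono : ∀ x ∈ Ω, Monotone (φ x)
  zero : ∀ x ∈ Ω, φ x 0 = 0
  lim_zero : ∀ x ∈ Ω, Tendsto (fun t : ℝ≥0 => φ x t) (nhdsWithin 0 (Set.Ioi 0)) (nhds 0)
  lim_top : ∀ x ∈ Ω, Tendsto (fun t : ℝ≥0 => φ x t) atTop (nhds ∞)
  almost_inc : ∃ L : ℝ≥0, 1 ≤ L ∧ ∀ x ∈ Ω, ∀ s t : ℝ≥0, 0 < s → s < t →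
    φ x s / (s : ℝ≥0∞) ≤ (L : ℝ≥0∞) * (φ x t / (t : ℝ≥0∞))

/-- A convex Φ-function on `Ω` (the class `Φ_c(Ω)`): a weak Φ-function which is
additionally convex and left-continuous in `t` for a.e. `x ∈ Ω`. -/
structure IsConvexPhi (Ω : Set (RSp n)) (φ : RSp n → ℝ≥0 → ℝ≥0∞)
    extends IsWeakPhi Ω φ : Prop where
  convex : ∀ᵐ x ∂(volume.restrict Ω), ∀ s t a b : ℝ≥0, a + b = 1 →
    φ x (a * s + b * t) ≤ (a : ℝ≥0∞) * φ x s + (b : ℝ≥0∞) * φ x t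
  left_cont : ∀ᵐ x ∂(volume.restrict Ω), ∀ t : ℝ≥0,
    Tendsto (φ x) (nhdsWithin t (Set.Iio t)) (nhds (φ x t))

/-- A strong Φ-function on `Ω` (the class `Φ_s(Ω)`): a weak Φ-function which is
additionally convex and continuous into `[0,∞]` for a.e. `x ∈ Ω`. -/
structure IsStrongPhi (Ω : Set (RSp n)) (φ : RSp n → ℝ≥0 → ℝ≥0∞)
    extends IsWeakPhi Ω φ : Prop where
  convex : ∀ᵐ x ∂(volume.restrict Ω), ∀ s t a b : ℝ≥0, a + b = 1 →
    φ x (a * s + b * t) ≤ (a : ℝ≥0∞) * φ x s + (b : ℝ≥0∞) * φ x t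
  cont : ∀ᵐ x ∂(volume.restrict Ω), Continuous (φ x)

/-- The generalized (left-)inverse `φ⁻¹(x,t) = inf {τ ≥ 0 : φ(x,τ) ≥ t}`. -/
def phiInv (φ : RSp n → ℝ≥0 → ℝ≥0∞) (x : RSp n) (t : ℝ≥0∞) : ℝ≥0∞ :=
  sInf ((fun s : ℝ≥0 => (s : ℝ≥0∞)) '' {s : ℝ≥0 | t ≤ φ x s})

/-- The condition `(aInc)_p` on `Ω`: `t ↦ φ(x,t)/t^p` is almost increasing, uniformly in `x`. -/
def AInc (p : ℝ) (Ω : Set (RSp n)) (φ : RSp n → ℝ≥0 → ℝ≥0∞) : Prop :=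
  ∃ L : ℝ≥0, 1 ≤ L ∧ ∀ x ∈ Ω, ∀ s t : ℝ≥0, 0 < s → s < t →
    φ x s / (s : ℝ≥0∞) ^ p ≤ (L : ℝ≥0∞) * (φ x t / (t : ℝ≥0∞) ^ p)

/-- The condition `(aDec)_q` on `Ω`: `t ↦ φ(x,t)/t^q` is almost decreasing, uniformly in `x`. -/
def ADec (q : ℝ) (Ω : Set (RSp n)) (φ : RSp n → ℝ≥0 → ℝ≥0∞) : Prop :=
  ∃ L : ℝ≥0, 1 ≤ L ∧ ∀ x ∈ Ω, ∀ s t : ℝ≥0, 0 < s → s < t →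
    φ x t / (t : ℝ≥0∞) ^ q ≤ (L : ℝ≥0∞) * (φ x s / (s : ℝ≥0∞) ^ q)

/-- The condition `(A0)` on `Ω`: `β ≤ φ⁻¹(x,1) ≤ 1/β` for a.e. `x ∈ Ω`. -/
def A0 (Ω : Set (RSp n)) (φ : RSp n → ℝ≥0 → ℝ≥0∞) : Prop :=
  ∃ β : ℝ≥0, 0 < β ∧ β ≤ 1 ∧ ∀ᵐ x ∂(volume.restrict Ω),
    (β : ℝ≥0∞) ≤ phiInv φ x 1 ∧ phiInv φ x 1 ≤ (β : ℝ≥0∞)⁻¹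

/-- The condition `(A1)` (on all of `ℝⁿ`). -/
def A1 (φ : RSp n → ℝ≥0 → ℝ≥0∞) : Prop :=
  ∃ β : ℝ≥0, 0 < β ∧ β < 1 ∧ ∀ Q : Cube n, volume Q.set ≤ 1 →
    ∀ᵐ x ∂(volume.restrict Q.set), ∀ᵐ y ∂(volume.restrict Q.set),
      ∀ t : ℝ≥0∞, 1 ≤ t → t ≤ (volume Q.set)⁻¹ →
        (β : ℝ≥0∞) * phiInv φ x t ≤ phiInv φ y t

/-- The condition `(A2)` (on all of `ℝⁿ`). -/
def A2 (φ : RSp n → ℝ≥0 → ℝ≥0∞) : Prop :=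
  ∃ φi : ℝ≥0 → ℝ≥0∞, IsWeakPhi Set.univ (fun _ : RSp n => φi) ∧
  ∃ h : RSp n → ℝ≥0∞, (∫⁻ x, h x) < ∞ ∧ (∃ M : ℝ≥0, ∀ᵐ x ∂(volume : Measure (RSp n)), h x ≤ M) ∧
  ∃ β : ℝ≥0, 0 < β ∧ β ≤ 1 ∧ ∃ s : ℝ≥0, 0 < s ∧
    ∀ᵐ x ∂(volume : Measure (RSp n)), ∀ t : ℝ≥0,
      (φi t ≤ (s : ℝ≥0∞) → φ x (β * t) ≤ φi t + h x) ∧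
      (φ x t ≤ (s : ℝ≥0∞) → φi (β * t) ≤ φ x t + h x)

/-- Membership in the generalized Orlicz space `L^φ(Ω)`. -/
def MemOrlicz (φ : RSp n → ℝ≥0 → ℝ≥0∞) (Ω : Set (RSp n)) (f : RSp n → ℝ) : Prop :=
  AEMeasurable f (volume.restrict Ω) ∧
  ∃ lam : ℝ≥0, 0 < lam ∧ (∫⁻ x in Ω, φ x (lam * ‖f x‖₊) ∂volume) < ∞

/-- The Luxemburg (quasi)norm of `L^φ(Ω)`. -/
def orliczNorm (φ : RSp n → ℝ≥0 → ℝ≥0∞) (Ω : Set (RSp n)) (f : RSp n → ℝ) : ℝ≥0∞ :=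
  sInf ((fun lam : ℝ≥0 => (lam : ℝ≥0∞)) ''
    {lam : ℝ≥0 | 0 < lam ∧ (∫⁻ x in Ω, φ x (‖f x‖₊ / lam) ∂volume) ≤ 1})

/-- The canonical extension of `φ(x,·)` to `[0,∞]`. -/
def phiE (φ : RSp n → ℝ≥0 → ℝ≥0∞) (x : RSp n) (t : ℝ≥0∞) : ℝ≥0∞ :=
  ⨆ (s : ℝ≥0) (_ : (s : ℝ≥0∞) ≤ t), φ x s

/-- The Luxemburg (quasi)norm for `[0,∞]`-valued functions. -/
def orliczNormE (φ : RSp n → ℝ≥0 → ℝ≥0∞) (Ω : Set (RSp n)) (g : RSp n → ℝ≥0∞) : ℝ≥0∞ :=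
  sInf ((fun lam : ℝ≥0 => (lam : ℝ≥0∞)) ''
    {lam : ℝ≥0 | 0 < lam ∧ (∫⁻ x in Ω, phiE φ x (g x / (lam : ℝ≥0∞)) ∂volume) ≤ 1})

/-- The average `b_Q` of `b` over the cube `Q`. -/
def cubeAvg (Q : Cube n) (b : RSp n → ℝ) : ℝ := ⨍ x in Q.set, b x

/-- The BMO seminorm `‖b‖_*`. -/
def bmoNorm (b : RSp n → ℝ) : ℝ≥0∞ :=
  ⨆ Q : Cube n, (volume Q.set)⁻¹ * ∫⁻ x in Q.set, ‖b x - cubeAvg Q b‖₊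

/-- `b ∈ BMO(ℝⁿ)`. -/
def IsBMO (b : RSp n → ℝ) : Prop := LocallyIntegrable b volume ∧ bmoNorm b < ∞

/-- The non-centred Hardy–Littlewood maximal function (over axes-parallel cubes). -/
def maximal (f : RSp n → ℝ) (x : RSp n) : ℝ≥0∞ :=
  ⨆ (Q : Cube n) (_ : x ∈ Q.set), (volume Q.set)⁻¹ * ∫⁻ y in Q.set, (‖f y‖₊ : ℝ≥0∞) ∂volume

/-- The fractional maximal function `M_α`. -/
def fracMaximal (α : ℝ) (f : RSp n → ℝ) (x : RSp n) : ℝ≥0∞ :=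
  ⨆ (Q : Cube n) (_ : x ∈ Q.set),
    volume Q.set ^ (α / (n : ℝ) - 1) * ∫⁻ y in Q.set, (‖f y‖₊ : ℝ≥0∞) ∂volume

/-- The maximal function restricted to subcubes of `Q₀`. -/
def restMaximal (Q₀ : Cube n) (f : RSp n → ℝ) (x : RSp n) : ℝ≥0∞ :=
  ⨆ (Q : Cube n) (_ : x ∈ Q.set) (_ : Q.set ⊆ Q₀.set),
    (volume Q.set)⁻¹ * ∫⁻ y in Q.set, (‖f y‖₊ : ℝ≥0∞) ∂volume

/-- The fractional maximal function restricted to subcubes of `Q₀`. -/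
def restFracMaximal (α : ℝ) (Q₀ : Cube n) (f : RSp n → ℝ) (x : RSp n) : ℝ≥0∞ :=
  ⨆ (Q : Cube n) (_ : x ∈ Q.set) (_ : Q.set ⊆ Q₀.set),
    volume Q.set ^ (α / (n : ℝ) - 1) * ∫⁻ y in Q.set, (‖f y‖₊ : ℝ≥0∞) ∂volume

/-- The sharp maximal function `M♯`. -/
def sharpMaximal (f : RSp n → ℝ) (x : RSp n) : ℝ≥0∞ :=
  ⨆ (Q : Cube n) (_ : x ∈ Q.set),
    (volume Q.set)⁻¹ * ∫⁻ y in Q.set, (‖f y - ⨍ z in Q.set, f z‖₊ : ℝ≥0∞) ∂volume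

/-- The maximal commutator `M_b`. -/
def maximalComm (b f : RSp n → ℝ) (x : RSp n) : ℝ≥0∞ :=
  ⨆ (Q : Cube n) (_ : x ∈ Q.set),
    (volume Q.set)⁻¹ * ∫⁻ y in Q.set, (‖b x - b y‖₊ : ℝ≥0∞) * (‖f y‖₊ : ℝ≥0∞) ∂volume

/-- The fractional maximal commutator `M_{b,α}`. -/
def fracMaximalComm (α : ℝ) (b f : RSp n → ℝ) (x : RSp n) : ℝ≥0∞ :=
  ⨆ (Q : Cube n) (_ : x ∈ Q.set),
    volume Q.set ^ (α / (n : ℝ) - 1) *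
      ∫⁻ y in Q.set, (‖b x - b y‖₊ : ℝ≥0∞) * (‖f y‖₊ : ℝ≥0∞) ∂volume

/-- The commutator `[M,b]f = M(bf) − b·Mf` of the maximal operator. -/
def maximalCommutator (b f : RSp n → ℝ) (x : RSp n) : ℝ :=
  (maximal (fun y => b y * f y) x).toReal - b x * (maximal f x).toReal

/-- The commutator `[M_α,b]f = M_α(bf) − b·M_α f` of the fractional maximal operator. -/
def fracMaximalCommutator (α : ℝ) (b f : RSp n → ℝ) (x : RSp n) : ℝ :=
  (fracMaximal α (fun y => b y * f y) x).toReal - b x * (fracMaximal α f x).toReal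

/-- The Riesz potential `I_α f`. -/
def riesz (α : ℝ) (f : RSp n → ℝ) (x : RSp n) : ℝ :=
  ∫ y, f y / dist x y ^ ((n : ℝ) - α)

/-- The commutator `[I_α, b]f = I_α(bf) − b·I_α f` of the Riesz potential. -/
def rieszCommutator (α : ℝ) (b f : RSp n → ℝ) (x : RSp n) : ℝ :=
  riesz α (fun y => b y * f y) x - b x * riesz α f x

/-- The operator `I_{b,α} f(x) = ∫ |b(x)−b(y)|·|x−y|^{α−n} f(y) dy`. -/
def rieszAbs (α : ℝ) (b f : RSp n → ℝ) (x : RSp n) : ℝ :=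
  ∫ y, |b x - b y| / dist x y ^ ((n : ℝ) - α) * f y

/-- Equivalence `φ ≃ ψ` of Φ-functions. -/
def PhiEquiv (φ ψ : RSp n → ℝ≥0 → ℝ≥0∞) : Prop :=
  ∃ L : ℝ≥0, 1 ≤ L ∧ ∀ x : RSp n, ∀ t : ℝ≥0, ψ x (t / L) ≤ φ x t ∧ φ x t ≤ ψ x (L * t)

/-- Weak equivalence `φ ∼ ψ` of Φ-functions. -/
def PhiWeakEquiv (φ ψ : RSp n → ℝ≥0 → ℝ≥0∞) : Prop :=
  ∃ L : ℝ≥0, 1 ≤ L ∧ ∃ h : RSp n → ℝ≥0∞, (∫⁻ x, h x) < ∞ ∧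
    ∀ᵐ x ∂(volume : Measure (RSp n)), ∀ t : ℝ≥0,
      ψ x t ≤ φ x (L * t) + h x ∧ φ x t ≤ ψ x (L * t) + h x

/-- The relation `φ⁻¹(x,t) ≈ t^{α/n}·ψ⁻¹(x,t)` with constants independent of `x` and `t > 0`. -/
def FracInvRel (α : ℝ) (φ ψ : RSp n → ℝ≥0 → ℝ≥0∞) : Prop :=
  ∃ c₁ c₂ : ℝ≥0, 0 < c₁ ∧ ∀ x : RSp n, ∀ t : ℝ≥0, 0 < t →
    (c₁ : ℝ≥0∞) * ((t : ℝ≥0∞) ^ (α / (n : ℝ)) * phiInv ψ x t) ≤ phiInv φ x t ∧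
    phiInv φ x t ≤ (c₂ : ℝ≥0∞) * ((t : ℝ≥0∞) ^ (α / (n : ℝ)) * phiInv ψ x t)

/-- The characteristic function of a cube, as a real-valued function. -/
def cubeIndicator (Q : Cube n) : RSp n → ℝ := Q.set.indicator 1

end

/-- Young-type inequality from the inverse inequality,
for convex Φ-functions. -/
theorem statement0 {n : ℕ} (Ω : Set (RSp n)) (hΩ : IsOpen Ω)
    (φ₁ φ₂ φ₃ : RSp n → ℝ≥0 → ℝ≥0∞)
    (h₁ : IsConvexPhi Ω φ₁) (h₂ : IsConvexPhi Ω φ₂) (h₃ : IsConvexPhi Ω φ₃)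
    (hinv : ∀ᵐ x ∂(volume.restrict Ω), ∀ t : ℝ≥0,
      phiInv φ₁ x t * phiInv φ₂ x t ≤ phiInv φ₃ x t) :
    ∀ᵐ x ∂(volume.restrict Ω), ∀ s t : ℝ≥0, 0 < s → 0 < t →
      φ₃ x (s * t) ≤ max (φ₁ x s) (φ₂ x t) ∧
      max (φ₁ x s) (φ₂ x t) ≤ φ₁ x s + φ₂ x t := by
  have key : ∀ (φ : RSp n → ℝ≥0 → ℝ≥0∞) (x : RSp n), Monotone (φ x) → ∀ (s : ℝ≥0) (τ : ℝ≥0∞),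
      φ x s < τ → (s : ℝ≥0∞) ≤ phiInv φ x τ := by
    intro φ x hm s τ hlt
    unfold phiInv
    refine le_sInf ?_
    rintro _ ⟨r, hr, rfl⟩
    have hr' : τ ≤ φ x r := hr
    by_contra hcon
    have hrs : r ≤ s := by
      have : (r : ℝ≥0∞) ≤ (s : ℝ≥0∞) := (not_le.mp hcon).le
      exact_mod_cast this
    exact absurd (hlt.trans_le (hr'.trans (hm hrs))) (lt_irrefl _)
  filter_upwards [hinv, h₃.left_cont, ae_restrict_mem hΩ.measurableSet] with x hx hl hxΩ
  intro s t hs ht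
  refine ⟨?_, max_le le_self_add le_add_self⟩
  by_contra hcon
  obtain ⟨τ, hτ1, hτ2⟩ := ENNReal.lt_iff_exists_nnreal_btwn.mp (not_le.mp hcon)
  have a1 := key φ₁ x (h₁.mono x hxΩ) s τ ((le_max_left _ _).trans_lt hτ1)
  have a2 := key φ₂ x (h₂.mono x hxΩ) t τ ((le_max_right _ _).trans_lt hτ1)
  have hpos : 0 < s * t := mul_pos hs ht
  haveI : (nhdsWithin (s * t) (Set.Iio (s * t))).NeBot := nhdsLT_neBot_of_exists_lt ⟨0, hpos⟩
  have hev := (hl (s * t)).eventually (lt_mem_nhds hτ2)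
  obtain ⟨u, hu1, hu2⟩ := (hev.and self_mem_nhdsWithin).exists
  have a3 : phiInv φ₃ x τ ≤ (u : ℝ≥0∞) := sInf_le ⟨u, hu1.le, rfl⟩
  have a4 : ((s * t : ℝ≥0) : ℝ≥0∞) ≤ (u : ℝ≥0∞) := by
    rw [ENNReal.coe_mul]
    exact (mul_le_mul' a1 a2).trans ((hx τ).trans a3)
  have a5 : s * t ≤ u := by exact_mod_cast a4
  exact absurd hu2 (not_lt.mpr a5)
end

section
/- Suppose the Fractional assumptions hold for φ, ψ ∈ Φ_w(ℝⁿ). Then there exist strong Φ-functions φ̃, ψ̃ ∈ Φ_s(ℝⁿ) such that φ ∼ φ̃, ψ ∼ ψ̃, φ̃⁻¹(x,t) ≈ t^{α/n}·ψ̃⁻¹(x,t), and there is a constant C with ψ̃⁻¹(x,t) ≤ C·ψ̃⁻¹(y,t) for every cube Q ⊂ ℝⁿ (of arbitrary size), almost every x, y ∈ Q and every t ∈ [0, 1/|Q|]. -/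
open MeasureTheory NNReal ENNReal Filter Set

noncomputable section

lemma phiInv_le' {φ : RSp n → ℝ≥0 → ℝ≥0∞} {x : RSp n} {v : ℝ≥0∞} {s : ℝ≥0}
    (h : v ≤ φ x s) : phiInv φ x v ≤ s := sInf_le ⟨s, h, rfl⟩

lemma le_phiInv' {φ : RSp n → ℝ≥0 → ℝ≥0∞} {x : RSp n} {v c : ℝ≥0∞}
    (h : ∀ s : ℝ≥0, v ≤ φ x s → c ≤ s) : c ≤ phiInv φ x v := by
  apply le_sInf
  rintro _ ⟨s, hs, rfl⟩
  exact h s hs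

lemma le_of_phiInv_lt' {φ : RSp n → ℝ≥0 → ℝ≥0∞} {x : RSp n} {v : ℝ≥0∞} {s : ℝ≥0}
    (hm : Monotone (φ x)) (h : phiInv φ x v < s) : v ≤ φ x s := by
  obtain ⟨_, ⟨u, hu, rfl⟩, hus⟩ := sInf_lt_iff.1 h
  exact le_trans hu (hm (ENNReal.coe_le_coe.1 hus.le))

lemma phiInv_mono' {φ : RSp n → ℝ≥0 → ℝ≥0∞} {x : RSp n} {u v : ℝ≥0∞} (h : u ≤ v) :
    phiInv φ x u ≤ phiInv φ x v :=
  le_phiInv' fun _ hs => phiInv_le' (h.trans hs)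

/-- if for every `s` above the inverse at `u`, the value at `c * s` is at least `v`. -/
lemma phiInv_le_mul {φ : RSp n → ℝ≥0 → ℝ≥0∞} {x y : RSp n} {u v : ℝ≥0∞} {c : ℝ≥0} (hc : c ≠ 0)
    (h : ∀ s : ℝ≥0, u ≤ φ x s → v ≤ φ y (c * s)) : phiInv φ y v ≤ c * phiInv φ x u := by
  have hc' : (c : ℝ≥0∞) ≠ 0 := by exact_mod_cast hc
  rw [mul_comm, ← ENNReal.div_le_iff_le_mul (Or.inl hc') (Or.inl ENNReal.coe_ne_top)]
  apply le_phiInv'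
  intro s hs
  rw [ENNReal.div_le_iff_le_mul (Or.inl hc') (Or.inl ENNReal.coe_ne_top), mul_comm]
  exact_mod_cast phiInv_le' (h s hs)

/-- Growth condition for a two-sided sequence. -/
structure GoodSeq (C A B : ℝ≥0) (b : ℤ → ℝ≥0) : Prop where
  pos : ∀ k, 0 < b k
  up : ∀ (k : ℤ) (i : ℕ), b (k + i) ≤ C * A ^ i * b k
  dn : ∀ (k : ℤ) (i : ℕ), b k ≤ C * B ^ i * b (k + i)

/-- The regularized function attached to a sequence. -/
def fReg (b : ℤ → ℝ≥0) (t : ℝ≥0) : ℝ≥0∞ :=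
  ∑' k : ℤ, (((2 : ℝ≥0) ^ k / b k * (t - b k) : ℝ≥0) : ℝ≥0∞)

lemma fReg_mono (b : ℤ → ℝ≥0) : Monotone (fReg b) := by
  intro s t hst
  apply ENNReal.tsum_le_tsum
  intro k
  gcongr

lemma fReg_zero (b : ℤ → ℝ≥0) : fReg b 0 = 0 := by simp [fReg]

lemma fReg_convex (b : ℤ → ℝ≥0) (s t u v : ℝ≥0) (h : u + v = 1) :
    fReg b (u * s + v * t) ≤ u * fReg b s + v * fReg b t := by
  unfold fReg
  rw [← ENNReal.tsum_mul_left, ← ENNReal.tsum_mul_left, ← ENNReal.tsum_add]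
  apply ENNReal.tsum_le_tsum
  intro k
  have : u * s + v * t - b k ≤ u * (s - b k) + v * (t - b k) := by
    rw [tsub_le_iff_right]
    have h1 : s ≤ (s - b k) + b k := le_tsub_add
    have h2 : t ≤ (t - b k) + b k := le_tsub_add
    calc u * s + v * t ≤ u * ((s - b k) + b k) + v * ((t - b k) + b k) := by gcongr
      _ = u * (s - b k) + v * (t - b k) + (u + v) * b k := by ring
      _ = _ := by rw [h, one_mul]
  have h3 : 2 ^ k / b k * (u * s + v * t - b k) ≤
      u * (2 ^ k / b k * (s - b k)) + v * (2 ^ k / b k * (t - b k)) := by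
    calc _ ≤ 2 ^ k / b k * (u * (s - b k) + v * (t - b k)) := by gcongr
      _ = _ := by ring
  exact_mod_cast h3

/-- lower bound of regularization -/
lemma le_fReg (b : ℤ → ℝ≥0) (m : ℤ) (hb : 0 < b m) : (((2 : ℝ≥0) ^ m : ℝ≥0) : ℝ≥0∞) ≤ fReg b (2 * b m) := by
  refine le_trans ?_ (ENNReal.le_tsum m)
  have : 2 * b m - b m = b m := by rw [two_mul, add_tsub_cancel_right]
  rw [this, div_mul_cancel₀ _ hb.ne']

def Rc (A : ℝ≥0) : ℝ≥0 := (1 - A / 2)⁻¹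

lemma slope_le {C A B : ℝ≥0} {b : ℤ → ℝ≥0} (hb : GoodSeq C A B b) (hA : A < 2) (m : ℤ) :
    ∑' k : ℤ, (if k ≤ m then (((2 : ℝ≥0) ^ k / b k : ℝ≥0) : ℝ≥0∞) else 0) ≤
      (C * Rc A * 2 ^ m / b m : ℝ≥0) := by
  have hinj : Function.Injective (fun i : ℕ => m - (i : ℤ)) := by
    intro i j h
    simpa using h
  rw [← hinj.tsum_eq]
  · calc _ ≤ ∑' i : ℕ, ((C * 2 ^ m / b m : ℝ≥0) : ℝ≥0∞) * ((A / 2 : ℝ≥0) : ℝ≥0∞) ^ i := by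
          apply ENNReal.tsum_le_tsum
          intro i
          rw [if_pos (by simp)]
          have h1 := hb.up (m - i) i
          rw [sub_add_cancel] at h1
          have h2 := hb.pos (m - i)
          have h3 := hb.pos m
          have : 2 ^ (m - (i : ℤ)) / b (m - i) ≤ C * 2 ^ m / b m * (A / 2) ^ i := by
            rw [div_le_iff₀ h2, zpow_sub₀ two_ne_zero, zpow_natCast]
            calc (2 : ℝ≥0) ^ m / 2 ^ i = 2 ^ m / 2 ^ i / b m * b m := by
                  rw [div_mul_cancel₀ _ h3.ne']
              _ ≤ 2 ^ m / 2 ^ i / b m * (C * A ^ i * b (m - i)) := by gcongr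
              _ = _ := by rw [div_pow]; ring
          exact_mod_cast this
      _ = _ := by
          rw [ENNReal.tsum_mul_left, ENNReal.tsum_geometric]
          have hA' : A / 2 < 1 := by rw [div_lt_one₀ (by norm_num)]; exact hA
          have h0 : (1 - A / 2) ≠ 0 := (tsub_pos_of_lt hA').ne'
          rw [← ENNReal.coe_one, ← ENNReal.coe_sub, ← ENNReal.coe_inv h0, ← ENNReal.coe_mul]
          congr 1
          unfold Rc
          ring
  · intro k hk
    have : k ≤ m := by
      by_contra h
      simp [h] at hk
    exact ⟨(m - k).toNat, by simp; omega⟩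

lemma GoodSeq.one_le {C A B : ℝ≥0} {b : ℤ → ℝ≥0} (hb : GoodSeq C A B b) : 1 ≤ C := by
  have := hb.up 0 0
  simp only [Nat.cast_zero, add_zero, pow_zero, mul_one] at this
  exact (le_mul_iff_one_le_left (hb.pos 0)).1 this

lemma fReg_lip {C A B : ℝ≥0} {b : ℤ → ℝ≥0} (hb : GoodSeq C A B b) (hA : A < 2) (hB : B ≤ 1) (m : ℤ)
    (s t : ℝ≥0) (hst : s ≤ t) (ht : t ≤ b m / C) :
    fReg b t ≤ fReg b s + (t - s : ℝ≥0) * (C * Rc A * 2 ^ m / b m : ℝ≥0) := by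
  have hC : 0 < C := zero_lt_one.trans_le hb.one_le
  refine le_trans ?_ (add_le_add_right (mul_le_mul_right (slope_le hb hA m) _) _)
  unfold fReg
  rw [← ENNReal.tsum_mul_left, ← ENNReal.tsum_add]
  apply ENNReal.tsum_le_tsum
  intro k
  split_ifs with hk
  · have h1 : t - b k ≤ (s - b k) + (t - s) := by
      rw [tsub_le_iff_right]
      calc t = s + (t - s) := (add_tsub_cancel_of_le hst).symm
        _ ≤ (s - b k + b k) + (t - s) := by gcongr; exact le_tsub_add
        _ = _ := by ring
    have : 2 ^ k / b k * (t - b k) ≤ 2 ^ k / b k * (s - b k) + (t - s) * (2 ^ k / b k) := by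
      calc _ ≤ 2 ^ k / b k * ((s - b k) + (t - s)) := by gcongr
        _ = _ := by ring
    exact_mod_cast this
  · have h1 := hb.dn m (k - m).toNat
    have h2 : m + ((k - m).toNat : ℤ) = k := by omega
    rw [h2] at h1
    have h3 : t ≤ b k := by
      refine ht.trans ?_
      rw [div_le_iff₀ hC]
      calc b m ≤ C * B ^ (k - m).toNat * b k := h1
        _ ≤ C * 1 * b k := by gcongr; exact pow_le_one₀ (by simp) hB
        _ = _ := by ring
    rw [tsub_eq_zero_of_le h3]
    simp

lemma fReg_le {C A B : ℝ≥0} {b : ℤ → ℝ≥0} (hb : GoodSeq C A B b) (hA : A < 2) (hB : B ≤ 1) (m : ℤ)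
    (t : ℝ≥0) (ht : t ≤ b m / C) : fReg b t ≤ (Rc A * 2 ^ m : ℝ≥0) := by
  have hC : 0 < C := zero_lt_one.trans_le hb.one_le
  have h := fReg_lip hb hA hB m 0 t zero_le ht
  rw [fReg_zero, zero_add, tsub_zero, ← ENNReal.coe_mul] at h
  refine h.trans (ENNReal.coe_le_coe.2 ?_)
  have := hb.pos m
  calc t * (C * Rc A * 2 ^ m / b m) ≤ b m / C * (C * Rc A * 2 ^ m / b m) := by gcongr
    _ = _ := by field_simp

/-- every `t` is below some element of the sequence -/
lemma exists_le_seq {C A B : ℝ≥0} {b : ℤ → ℝ≥0} (hb : GoodSeq C A B b) (hB : B < 1) (t : ℝ≥0) :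
    ∃ m : ℤ, t < b m / C := by
  have hC : 0 < C := zero_lt_one.trans_le hb.one_le
  have hlim : Tendsto (fun i : ℕ => C * B ^ i * (C * (t + 1))) atTop (nhds (C * 0 * (C * (t + 1)))) := by
    apply Filter.Tendsto.mul_const
    apply Filter.Tendsto.const_mul
    exact tendsto_pow_atTop_nhds_zero_of_lt_one (by simp) hB
  rw [mul_zero, zero_mul] at hlim
  obtain ⟨i, hi⟩ := (hlim.eventually_lt_const (hb.pos 0)).exists
  refine ⟨0 + i, ?_⟩
  rw [lt_div_iff₀ hC]
  by_contra hcon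
  rw [not_lt] at hcon
  have h1 := hb.dn 0 i
  have : b 0 ≤ C * B ^ i * (C * (t + 1)) := by
    refine h1.trans ?_
    gcongr
    refine hcon.trans ?_
    rw [mul_comm]
    gcongr
    simp
  exact absurd hi (not_lt.2 this)

lemma fReg_cont {C A B : ℝ≥0} {b : ℤ → ℝ≥0} (hb : GoodSeq C A B b) (hA : A < 2) (hB : B < 1) :
    Continuous (fReg b) := by
  rw [continuous_iff_continuousAt]
  intro t
  obtain ⟨m, hm⟩ := exists_le_seq hb hB t
  set K : ℝ≥0 := C * Rc A * 2 ^ m / b m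
  have hfin : fReg b t ≠ ⊤ := ((fReg_le hb hA hB.le m t hm.le).trans_lt ENNReal.coe_lt_top).ne
  have hK : Tendsto (fun s : ℝ≥0 => (((max s t - min s t : ℝ≥0) : ℝ≥0∞) * (K : ℝ≥0∞))) (nhds t) (nhds 0) := by
    have : Continuous (fun s : ℝ≥0 => (((max s t - min s t) * K : ℝ≥0) : ℝ≥0∞)) := by fun_prop
    have h2 := this.tendsto t
    simpa using h2
  refine tendsto_order.2 ⟨?_, ?_⟩
  · intro a ha
    have : Tendsto (fun s : ℝ≥0 => a + (((max s t - min s t : ℝ≥0) : ℝ≥0∞) * (K : ℝ≥0∞))) (nhds t) (nhds (a + 0)) :=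
      tendsto_const_nhds.add hK
    rw [add_zero] at this
    filter_upwards [this.eventually_lt_const ha, eventually_lt_nhds hm] with s hs hsm
    by_contra hcon
    rw [not_lt] at hcon
    apply absurd hs
    rw [not_lt]
    have h1 : fReg b t ≤ fReg b (min s t) + ((t - min s t : ℝ≥0) : ℝ≥0∞) * (K : ℝ≥0∞) :=
      fReg_lip hb hA hB.le m _ _ (min_le_right _ _) hm.le
    refine h1.trans ?_
    gcongr
    · exact (fReg_mono b (min_le_left _ _)).trans hcon
    · exact le_max_right _ _
  · intro a ha
    have : Tendsto (fun s : ℝ≥0 => fReg b t + (((max s t - min s t : ℝ≥0) : ℝ≥0∞) * (K : ℝ≥0∞))) (nhds t) (nhds (fReg b t + 0)) :=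
      tendsto_const_nhds.add hK
    rw [add_zero] at this
    filter_upwards [this.eventually_lt_const ha, eventually_lt_nhds hm] with s hs hsm
    refine lt_of_le_of_lt ?_ hs
    have h1 : fReg b (max s t) ≤ fReg b t + ((max s t - t : ℝ≥0) : ℝ≥0∞) * (K : ℝ≥0∞) :=
      fReg_lip hb hA hB.le m _ _ (le_max_right _ _) (max_le hsm.le hm.le)
    refine ((fReg_mono b (le_max_left _ _)).trans h1).trans ?_
    gcongr
    exact min_le_right _ _

end

noncomputable section

lemma isStrongPhi_fReg {C A B : ℝ≥0} {e : RSp n → ℤ → ℝ≥0} (hb : ∀ x, GoodSeq C A B (e x))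
    (hA : A < 2) (hB : B < 1) (hmeas : ∀ k, AEMeasurable (fun x => e x k) volume) :
    IsStrongPhi Set.univ (fun x => fReg (e x)) where
  meas := by
    intro f hf
    rw [Measure.restrict_univ]
    apply AEMeasurable.ennreal_tsum
    intro k
    apply AEMeasurable.coe_nnreal_ennreal
    exact ((aemeasurable_const.div (hmeas k)).mul (hf.aemeasurable.sub (hmeas k)))
  mono := fun x _ => fReg_mono _
  zero := fun x _ => fReg_zero _
  lim_zero := by
    intro x _
    have := (fReg_cont (hb x) hA hB).tendsto 0
    rw [fReg_zero] at this
    exact this.mono_left nhdsWithin_le_nhds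
  lim_top := by
    intro x _
    rw [ENNReal.tendsto_nhds_top_iff_nnreal]
    intro a
    obtain ⟨i, hi⟩ := pow_unbounded_of_one_lt a (one_lt_two (α := ℝ≥0))
    filter_upwards [eventually_ge_atTop (2 * e x i)] with t ht
    refine lt_of_lt_of_le ?_ ((le_fReg (e x) i ((hb x).pos i)).trans (fReg_mono _ ht))
    rw [zpow_natCast]
    exact_mod_cast hi
  almost_inc := by
    refine ⟨1, le_rfl, ?_⟩
    intro x _ s t hs hst
    have ht : 0 < t := hs.trans hst
    have hle : s / t ≤ 1 := by rw [div_le_one₀ ht]; exact hst.le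
    have h := fReg_convex (e x) t 0 (s / t) (1 - s / t) (add_tsub_cancel_of_le hle)
    rw [mul_zero, add_zero, div_mul_cancel₀ _ ht.ne', fReg_zero, mul_zero, add_zero] at h
    rw [ENNReal.coe_one, one_mul]
    have hs' : (s : ℝ≥0∞) ≠ 0 := by exact_mod_cast hs.ne'
    rw [ENNReal.div_le_iff hs' ENNReal.coe_ne_top]
    refine h.trans (le_of_eq ?_)
    rw [ENNReal.coe_div ht.ne', div_eq_mul_inv, div_eq_mul_inv]
    ring
  convex := by
    filter_upwards with x
    exact fun s t u v h => fReg_convex _ s t u v h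
  cont := by
    filter_upwards with x
    exact fReg_cont (hb x) hA hB

/-- the inverse of the regularization is comparable to the sequence -/
lemma fReg_inv (C A B : ℝ≥0) (hA : A < 2) (hB : B < 1) : ∃ M : ℝ≥0, 1 ≤ M ∧
    ∀ e : RSp n → ℤ → ℝ≥0, ∀ x, GoodSeq C A B (e x) → ∀ k : ℤ, ∀ t : ℝ≥0∞,
      ((2 ^ k : ℝ≥0) : ℝ≥0∞) ≤ t → t ≤ ((2 ^ (k + 1) : ℝ≥0) : ℝ≥0∞) →
      phiInv (fun x => fReg (e x)) x t ≤ (M : ℝ≥0∞) * e x k ∧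
      (e x k : ℝ≥0∞) ≤ (M : ℝ≥0∞) * phiInv (fun x => fReg (e x)) x t := by
  obtain ⟨N, hN⟩ := pow_unbounded_of_one_lt (Rc A) (one_lt_two (α := ℝ≥0))
  refine ⟨max 1 (max (2 * (C * A)) (C * A ^ N * C)), le_max_left _ _, ?_⟩
  intro e x hb k t hkt htk
  have hC : 0 < C := zero_lt_one.trans_le hb.one_le
  constructor
  · have h1 : phiInv (fun x => fReg (e x)) x t ≤ ((2 * e x (k + 1) : ℝ≥0) : ℝ≥0∞) :=
      phiInv_le' (htk.trans (le_fReg (e x) (k + 1) (hb.pos _)))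
    refine h1.trans ?_
    have h2 := hb.up k 1
    have : 2 * e x (k + 1) ≤ max 1 (max (2 * (C * A)) (C * A ^ N * C)) * e x k := by
      calc 2 * e x (k + 1) ≤ 2 * (C * A ^ 1 * e x k) := by gcongr; exact_mod_cast h2
        _ = (2 * (C * A)) * e x k := by ring
        _ ≤ _ := by gcongr; exact (le_max_left _ _).trans (le_max_right _ _)
    exact_mod_cast this
  · have h1 : ((e x (k - N) / C : ℝ≥0) : ℝ≥0∞) ≤ phiInv (fun x => fReg (e x)) x t := by
      apply le_phiInv'
      intro s hs
      by_contra hcon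
      rw [not_le] at hcon
      have h2 := fReg_le hb hA hB.le (k - N) s (ENNReal.coe_le_coe.1 hcon.le)
      have h3 := ENNReal.coe_le_coe.1 ((hkt.trans hs).trans h2)
      have h4 : Rc A * 2 ^ (k - (N : ℤ)) < 2 ^ k := by
        calc Rc A * 2 ^ (k - (N : ℤ)) < 2 ^ N * 2 ^ (k - (N : ℤ)) := by gcongr
          _ = 2 ^ k := by
            rw [← zpow_natCast, ← zpow_add₀ two_ne_zero]; congr 1; ring
      exact absurd h3 (not_le.2 h4)
    have h5 := hb.up (k - N) N
    rw [sub_add_cancel] at h5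
    have h6 : e x k ≤ max 1 (max (2 * (C * A)) (C * A ^ N * C)) * (e x (k - N) / C) := by
      calc e x k ≤ (C * A ^ N * C) * (e x (k - N) / C) := by
            refine h5.trans (le_of_eq ?_); field_simp
        _ ≤ _ := by gcongr; exact (le_max_right _ _).trans (le_max_right _ _)
    calc (e x k : ℝ≥0∞) ≤ ((max 1 (max (2 * (C * A)) (C * A ^ N * C)) * (e x (k - N) / C) : ℝ≥0) : ℝ≥0∞) := by
          exact_mod_cast h6
      _ = ((max 1 (max (2 * (C * A)) (C * A ^ N * C)) : ℝ≥0) : ℝ≥0∞) * ((e x (k - N) / C : ℝ≥0) : ℝ≥0∞) := by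
          rw [ENNReal.coe_mul]
      _ ≤ _ := by gcongr

lemma le_of_inv {f g : RSp n → ℝ≥0 → ℝ≥0∞} {x : RSp n} {h : ℝ≥0∞} {M : ℝ≥0} (hM : 0 < M)
    (hf : f x 0 = 0) (hg : Monotone (g x))
    (H : ∀ k : ℤ, h ≤ ((2 ^ k : ℝ≥0) : ℝ≥0∞) →
      phiInv g x ((2 ^ (k + 1) : ℝ≥0) : ℝ≥0∞) ≤ M * phiInv f x ((2 ^ k : ℝ≥0) : ℝ≥0∞)) (t : ℝ≥0) :
    f x t ≤ g x ((2 * M) * t) + 2 * h := by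
  by_cases ht : t = 0
  · subst ht; rw [hf]; exact zero_le
  have ht' : 0 < t := pos_iff_ne_zero.2 ht
  by_contra hcon
  rw [not_le] at hcon
  have hk : ∃ k : ℤ, ((2 ^ k : ℝ≥0) : ℝ≥0∞) ≤ f x t ∧
      g x ((2 * M) * t) + 2 * h < ((2 ^ (k + 1) : ℝ≥0) : ℝ≥0∞) := by
    by_cases htop : f x t = ⊤
    · rw [htop] at hcon
      lift g x ((2 * M) * t) + 2 * h to ℝ≥0 using hcon.ne with a ha
      obtain ⟨N, hN⟩ := pow_unbounded_of_one_lt a (one_lt_two (α := ℝ≥0))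
      refine ⟨N, by rw [htop]; exact le_top, ?_⟩
      rw [ENNReal.coe_lt_coe]
      refine hN.trans ?_
      rw [← zpow_natCast]
      exact zpow_lt_zpow_right₀ one_lt_two (by omega)
    · have h0 : f x t ≠ 0 := (pos_of_gt hcon).ne'
      lift f x t to ℝ≥0 using htop with a ha
      obtain ⟨k, hk1, hk2⟩ := NNReal.exists_mem_Ico_zpow (y := 2) (by exact_mod_cast h0 : a ≠ 0) one_lt_two
      exact ⟨k, by exact_mod_cast hk1, hcon.trans (by exact_mod_cast hk2)⟩
  obtain ⟨k, hk1, hk2⟩ := hk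
  have hh : h ≤ ((2 ^ k : ℝ≥0) : ℝ≥0∞) := by
    have h2 : 2 * h ≤ 2 * ((2 ^ k : ℝ≥0) : ℝ≥0∞) := by
      refine (le_add_self.trans hk2.le).trans (le_of_eq ?_)
      rw [zpow_add_one₀ two_ne_zero, mul_comm]
      push_cast; rfl
    exact (ENNReal.mul_le_mul_iff_right (by simp) (by simp)).1 h2
  have h3 : phiInv g x ((2 ^ (k + 1) : ℝ≥0) : ℝ≥0∞) < ((2 * M * t : ℝ≥0) : ℝ≥0∞) := by
    calc _ ≤ M * phiInv f x ((2 ^ k : ℝ≥0) : ℝ≥0∞) := H k hh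
      _ ≤ M * t := by gcongr; exact phiInv_le' hk1
      _ < _ := by
        rw [← ENNReal.coe_mul, ENNReal.coe_lt_coe, mul_assoc, two_mul]
        exact lt_add_of_pos_left _ (by positivity)
  have h4 := le_of_phiInv_lt' hg h3
  exact absurd (h4.trans le_self_add) (not_le.2 hk2)

lemma weakEquiv_of_inv {f g : RSp n → ℝ≥0 → ℝ≥0∞} (h : RSp n → ℝ≥0∞) (hh : ∫⁻ x, h x < ∞)
    {M : ℝ≥0} (hM : 1 ≤ M) (hf0 : ∀ x, f x 0 = 0) (hg0 : ∀ x, g x 0 = 0)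
    (hf : ∀ x, Monotone (f x)) (hg : ∀ x, Monotone (g x))
    (H : ∀ᵐ x ∂(volume : Measure (RSp n)), ∀ k : ℤ, h x ≤ ((2 ^ k : ℝ≥0) : ℝ≥0∞) →
      phiInv g x ((2 ^ (k + 1) : ℝ≥0) : ℝ≥0∞) ≤ M * phiInv f x ((2 ^ k : ℝ≥0) : ℝ≥0∞) ∧
      phiInv f x ((2 ^ (k + 1) : ℝ≥0) : ℝ≥0∞) ≤ M * phiInv g x ((2 ^ k : ℝ≥0) : ℝ≥0∞)) :
    PhiWeakEquiv f g := by
  refine ⟨2 * M, ?_, fun x => 2 * h x, ?_, ?_⟩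
  · rw [two_mul]; exact hM.trans le_self_add
  · rw [lintegral_const_mul' _ _ (by simp)]
    exact ENNReal.mul_lt_top (by simp) hh
  · filter_upwards [H] with x hx t
    have hM' : 0 < M := zero_lt_one.trans_le hM
    exact ⟨le_of_inv hM' (hg0 x) (hf x) (fun k hk => (hx k hk).2) t,
      le_of_inv hM' (hf0 x) (hg x) (fun k hk => (hx k hk).1) t⟩

/-- splicing two good sequences -/
lemma GoodSeq.splice {C A B c : ℝ≥0} {a b : ℤ → ℝ≥0} (ha : GoodSeq C A B a) (hb : GoodSeq C A B b)
    (hc : 1 ≤ c) (h1 : a 0 ≤ c * b 0) (h2 : b 0 ≤ c * a 0) :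
    GoodSeq (C * C * c) A B (fun k => if 0 ≤ k then b k else a k) where
  pos := by
    intro k
    split_ifs
    · exact hb.pos k
    · exact ha.pos k
  up := by
    intro k i
    have hC := ha.one_le
    have hCC : C ≤ C * C * c := by
      calc C = C * 1 * 1 := by ring
        _ ≤ _ := by gcongr
    by_cases hk : 0 ≤ k
    · simp only [hk, if_true, (by omega : 0 ≤ k + i)]
      exact (hb.up k i).trans (by gcongr)
    · by_cases hki : 0 ≤ k + i
      · simp only [hk, hki, if_true, if_false]
        have e1 := hb.up 0 (k + i).toNat
        have e2 := ha.up k (-k).toNat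
        rw [show (0 : ℤ) + ((k + i).toNat : ℤ) = k + i by omega] at e1
        rw [show k + ((-k).toNat : ℤ) = 0 by omega] at e2
        have e3 : i = (k + i).toNat + (-k).toNat := by omega
        calc b (k + i) ≤ C * A ^ (k + i).toNat * (c * (C * A ^ (-k).toNat * a k)) := by
              refine e1.trans ?_; gcongr; refine h2.trans ?_; gcongr
          _ = C * C * c * A ^ ((k + i).toNat + (-k).toNat) * a k := by rw [pow_add]; ring
          _ = _ := by rw [← e3]
      · simp only [hk, hki, if_false]
        exact (ha.up k i).trans (by gcongr)
  dn := by
    intro k i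
    have hC := ha.one_le
    have hCC : C ≤ C * C * c := by
      calc C = C * 1 * 1 := by ring
        _ ≤ _ := by gcongr
    by_cases hk : 0 ≤ k
    · simp only [hk, if_true, (by omega : 0 ≤ k + i)]
      exact (hb.dn k i).trans (by gcongr)
    · by_cases hki : 0 ≤ k + i
      · simp only [hk, hki, if_true, if_false]
        have e1 := hb.dn 0 (k + i).toNat
        have e2 := ha.dn k (-k).toNat
        rw [show (0 : ℤ) + ((k + i).toNat : ℤ) = k + i by omega] at e1
        rw [show k + ((-k).toNat : ℤ) = 0 by omega] at e2
        have e3 : i = (k + i).toNat + (-k).toNat := by omega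
        calc a k ≤ C * B ^ (-k).toNat * (c * (C * B ^ (k + i).toNat * b (k + i))) := by
              refine e2.trans ?_; gcongr; refine h1.trans ?_; gcongr
          _ = C * C * c * B ^ ((k + i).toNat + (-k).toNat) * b (k + i) := by rw [pow_add]; ring
          _ = _ := by rw [← e3]
      · simp only [hk, hki, if_false]
        exact (ha.dn k i).trans (by gcongr)

/-- multiplying a good sequence by a geometric sequence -/
lemma GoodSeq.geom {C A B τ : ℝ≥0} {b : ℤ → ℝ≥0} (hb : GoodSeq C A B b) (hτ : 0 < τ) :
    GoodSeq C (A / τ) (B * τ) (fun k => b k / τ ^ k) where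
  pos := fun k => div_pos (hb.pos k) (by positivity)
  up := by
    intro k i
    calc b (k + i) / τ ^ (k + (i : ℤ)) ≤ (C * A ^ i * b k) / τ ^ (k + (i : ℤ)) := by
          gcongr; exact hb.up k i
      _ = _ := by rw [zpow_add₀ hτ.ne', zpow_natCast, div_pow]; field_simp
  dn := by
    intro k i
    calc b k / τ ^ k ≤ (C * B ^ i * b (k + i)) / τ ^ k := by
          gcongr; exact hb.dn k i
      _ = _ := by rw [zpow_add₀ hτ.ne', zpow_natCast, mul_pow]; field_simp

end

noncomputable section

lemma phiInv_ne_zero {φ : RSp n → ℝ≥0 → ℝ≥0∞} (hφ : IsWeakPhi Set.univ φ) (x : RSp n) {v : ℝ≥0}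
    (hv : 0 < v) : phiInv φ x v ≠ 0 := by
  intro h0
  have h1 : Tendsto (fun t : ℝ≥0 => φ x t) (nhdsWithin 0 (Set.Ioi 0)) (nhds 0) :=
    hφ.lim_zero x trivial
  have h2 : ∀ᶠ t in nhdsWithin (0 : ℝ≥0) (Set.Ioi 0), φ x t < v :=
    h1.eventually_lt_const (by exact_mod_cast hv)
  obtain ⟨t, ht, ht0⟩ := (h2.and self_mem_nhdsWithin).exists
  have h3 : phiInv φ x v < t := by rw [h0]; exact_mod_cast ht0
  exact absurd (le_of_phiInv_lt' (hφ.mono x trivial) h3) (not_le.2 ht)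

lemma phiInv_ne_top {φ : RSp n → ℝ≥0 → ℝ≥0∞} (hφ : IsWeakPhi Set.univ φ) (x : RSp n) (v : ℝ≥0) :
    phiInv φ x v ≠ ⊤ := by
  have h2 := (hφ.lim_top x trivial).eventually_const_lt (ENNReal.coe_lt_top (r := v))
  obtain ⟨t, ht⟩ := h2.exists
  exact ((phiInv_le' ht.le).trans_lt ENNReal.coe_lt_top).ne

/-- dyadic values of the inverse -/
def dSeq (φ : RSp n → ℝ≥0 → ℝ≥0∞) (x : RSp n) (k : ℤ) : ℝ≥0 :=
  (phiInv φ x ((2 ^ k : ℝ≥0) : ℝ≥0∞)).toNNReal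

lemma coe_dSeq {φ : RSp n → ℝ≥0 → ℝ≥0∞} (hφ : IsWeakPhi Set.univ φ) (x : RSp n) (k : ℤ) :
    (dSeq φ x k : ℝ≥0∞) = phiInv φ x ((2 ^ k : ℝ≥0) : ℝ≥0∞) :=
  ENNReal.coe_toNNReal (phiInv_ne_top hφ x _)

lemma inc_aux {p : ℝ} (hp : 0 < p) {L : ℝ≥0} (hL : 1 ≤ L) {g : ℝ≥0 → ℝ≥0∞}
    (h : ∀ s t : ℝ≥0, 0 < s → s < t → g s / (s : ℝ≥0∞) ^ p ≤ (L : ℝ≥0∞) * (g t / (t : ℝ≥0∞) ^ p))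
    {s l : ℝ≥0} (hs : 0 < s) (hl : 1 ≤ l) :
    g s * (l : ℝ≥0∞) ^ p ≤ L * g (l * s) := by
  rcases hl.eq_or_lt with rfl | hl
  · simp only [ENNReal.coe_one, ENNReal.one_rpow, mul_one, one_mul]
    exact le_mul_of_one_le_left' (by exact_mod_cast hL)
  · have h1 := h s (l * s) hs (lt_mul_of_one_lt_left hs hl)
    have hs0 : (s : ℝ≥0∞) ^ p ≠ 0 := by
      simp [ENNReal.rpow_eq_zero_iff, hs.ne', hp.le]
    have hst : (s : ℝ≥0∞) ^ p ≠ ⊤ := ENNReal.rpow_ne_top_of_nonneg hp.le ENNReal.coe_ne_top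
    have hls0 : (l : ℝ≥0∞) ^ p ≠ 0 := by
      simp [ENNReal.rpow_eq_zero_iff, (zero_lt_one.trans hl).ne', hp.le]
    have hlst : (l : ℝ≥0∞) ^ p ≠ ⊤ := ENNReal.rpow_ne_top_of_nonneg hp.le ENNReal.coe_ne_top
    rw [ENNReal.div_le_iff hs0 hst, ENNReal.coe_mul, ENNReal.mul_rpow_of_nonneg _ _ hp.le,
      div_eq_mul_inv, ENNReal.mul_inv (Or.inl hls0) (Or.inl hlst)] at h1
    calc g s * (l : ℝ≥0∞) ^ p ≤ (L * (g (l * s) * (((l : ℝ≥0∞) ^ p)⁻¹ * ((s : ℝ≥0∞) ^ p)⁻¹)) * (s : ℝ≥0∞) ^ p) * (l : ℝ≥0∞) ^ p := by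
          gcongr
      _ = L * g (l * s) * (((l : ℝ≥0∞) ^ p)⁻¹ * (l : ℝ≥0∞) ^ p) * (((s : ℝ≥0∞) ^ p)⁻¹ * (s : ℝ≥0∞) ^ p) := by ring
      _ = _ := by
        rw [ENNReal.inv_mul_cancel hls0 hlst, ENNReal.inv_mul_cancel hs0 hst, mul_one, mul_one]

lemma dec_aux {q : ℝ} (hq : 0 < q) {L : ℝ≥0} (hL : 1 ≤ L) {g : ℝ≥0 → ℝ≥0∞}
    (h : ∀ s t : ℝ≥0, 0 < s → s < t → g t / (t : ℝ≥0∞) ^ q ≤ (L : ℝ≥0∞) * (g s / (s : ℝ≥0∞) ^ q))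
    {t l : ℝ≥0} (ht : 0 < t) (hl0 : 0 < l) (hl : l < 1) :
    g t * (l : ℝ≥0∞) ^ q ≤ L * g (l * t) := by
  have h1 := h (l * t) t (mul_pos hl0 ht) (mul_lt_of_lt_one_left ht hl)
  have hs0 : (t : ℝ≥0∞) ^ q ≠ 0 := by
    simp [ENNReal.rpow_eq_zero_iff, ht.ne', hq.le]
  have hst : (t : ℝ≥0∞) ^ q ≠ ⊤ := ENNReal.rpow_ne_top_of_nonneg hq.le ENNReal.coe_ne_top
  have hls0 : (l : ℝ≥0∞) ^ q ≠ 0 := by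
    simp [ENNReal.rpow_eq_zero_iff, hl0.ne', hq.le]
  have hlst : (l : ℝ≥0∞) ^ q ≠ ⊤ := ENNReal.rpow_ne_top_of_nonneg hq.le ENNReal.coe_ne_top
  rw [ENNReal.div_le_iff hs0 hst, ENNReal.coe_mul, ENNReal.mul_rpow_of_nonneg _ _ hq.le,
    div_eq_mul_inv, ENNReal.mul_inv (Or.inl hls0) (Or.inl hlst)] at h1
  calc g t * (l : ℝ≥0∞) ^ q ≤ (L * (g (l * t) * (((l : ℝ≥0∞) ^ q)⁻¹ * ((t : ℝ≥0∞) ^ q)⁻¹)) * (t : ℝ≥0∞) ^ q) * (l : ℝ≥0∞) ^ q := by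
        gcongr
    _ = L * g (l * t) * (((l : ℝ≥0∞) ^ q)⁻¹ * (l : ℝ≥0∞) ^ q) * (((t : ℝ≥0∞) ^ q)⁻¹ * (t : ℝ≥0∞) ^ q) := by ring
    _ = _ := by
      rw [ENNReal.inv_mul_cancel hls0 hlst, ENNReal.inv_mul_cancel hs0 hst, mul_one, mul_one]

lemma goodSeq_dSeq {φ : RSp n → ℝ≥0 → ℝ≥0∞} (hφ : IsWeakPhi Set.univ φ) {p r : ℝ}
    (hp : 0 < p) (hr : 0 < r) (hainc : AInc p Set.univ φ) (hadec : ADec (1 / r) Set.univ φ) :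
    ∃ C : ℝ≥0, ∀ x, GoodSeq C ((2 : ℝ≥0) ^ (1 / p)) ((2 : ℝ≥0) ^ (-r)) (dSeq φ x) := by
  obtain ⟨L, hL, hinc⟩ := hainc
  obtain ⟨L', hL', hdec⟩ := hadec
  have hLpos : 0 < L := zero_lt_one.trans_le hL
  have hLpos' : 0 < L' := zero_lt_one.trans_le hL'
  refine ⟨max (L ^ (1 / p)) (L' ^ r), fun x => ⟨?_, ?_, ?_⟩⟩
  · intro k
    have := phiInv_ne_zero hφ x (v := 2 ^ k) (by positivity)
    rw [← coe_dSeq hφ] at this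
    exact pos_iff_ne_zero.2 (by exact_mod_cast this)
  · intro k i
    set l : ℝ≥0 := L ^ (1 / p) * (2 ^ (1 / p)) ^ i with hl
    have hl1 : 1 ≤ l := by
      refine one_le_mul (NNReal.one_le_rpow hL (by positivity)) (one_le_pow₀ ?_)
      exact NNReal.one_le_rpow one_le_two (by positivity)
    have hlp : l ^ p = L * 2 ^ i := by
      rw [hl, NNReal.mul_rpow, ← NNReal.rpow_mul, one_div_mul_cancel hp.ne', NNReal.rpow_one,
        ← NNReal.rpow_natCast, ← NNReal.rpow_mul, ← NNReal.rpow_mul,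
        show 1 / p * (i * p) = i by field_simp, NNReal.rpow_natCast]
    have key : phiInv φ x ((2 ^ (k + (i : ℤ)) : ℝ≥0) : ℝ≥0∞) ≤ l * phiInv φ x ((2 ^ k : ℝ≥0) : ℝ≥0∞) := by
      apply phiInv_le_mul (zero_lt_one.trans_le hl1).ne'
      intro s hs
      have hspos : 0 < s := by
        rw [pos_iff_ne_zero]
        rintro rfl
        rw [hφ.zero x trivial] at hs
        rw [nonpos_iff_eq_zero, ENNReal.coe_eq_zero] at hs
        exact (zpow_pos (two_pos : (0 : ℝ≥0) < 2) k).ne' hs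
      have h1 := inc_aux hp hL (hinc x trivial) hspos hl1
      rw [← ENNReal.coe_rpow_of_nonneg _ hp.le, hlp] at h1
      have h2 : (L : ℝ≥0∞) * ((2 ^ (k + (i : ℤ)) : ℝ≥0) : ℝ≥0∞) ≤ L * φ x (l * s) := by
        refine le_trans ?_ h1
        calc (L : ℝ≥0∞) * ((2 ^ (k + (i : ℤ)) : ℝ≥0) : ℝ≥0∞) = ((2 ^ k : ℝ≥0) : ℝ≥0∞) * ((L * 2 ^ i : ℝ≥0) : ℝ≥0∞) := by
              rw [← ENNReal.coe_mul, ← ENNReal.coe_mul, zpow_add₀ two_ne_zero, zpow_natCast]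
              congr 1; ring
          _ ≤ _ := by gcongr
      exact (ENNReal.mul_le_mul_iff_right (by exact_mod_cast hLpos.ne') ENNReal.coe_ne_top).1 h2
    rw [← coe_dSeq hφ, ← coe_dSeq hφ, ← ENNReal.coe_mul, ENNReal.coe_le_coe] at key
    refine key.trans ?_
    rw [hl]
    gcongr
    exact le_max_left _ _
  · intro k i
    set l : ℝ≥0 := L' ^ r * (2 ^ (-r)) ^ i with hl
    have hl0 : 0 < l := by
      have h1 : 0 < L' ^ r := NNReal.rpow_pos hLpos'
      have h2 : 0 < (2 : ℝ≥0) ^ (-r) := NNReal.rpow_pos two_pos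
      positivity
    have hlp : l ^ (1 / r) = L' / 2 ^ i := by
      rw [hl, NNReal.mul_rpow, ← NNReal.rpow_mul, mul_one_div_cancel hr.ne', NNReal.rpow_one,
        ← NNReal.rpow_natCast, ← NNReal.rpow_mul, ← NNReal.rpow_mul,
        show -r * (i * (1 / r)) = -i by field_simp, NNReal.rpow_neg, NNReal.rpow_natCast,
        div_eq_mul_inv]
    have key : phiInv φ x ((2 ^ k : ℝ≥0) : ℝ≥0∞) ≤ l * phiInv φ x ((2 ^ (k + (i : ℤ)) : ℝ≥0) : ℝ≥0∞) := by
      apply phiInv_le_mul hl0.ne'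
      intro s hs
      have hspos : 0 < s := by
        rw [pos_iff_ne_zero]
        rintro rfl
        rw [hφ.zero x trivial] at hs
        rw [nonpos_iff_eq_zero, ENNReal.coe_eq_zero] at hs
        exact (zpow_pos (two_pos : (0 : ℝ≥0) < 2) (k + i)).ne' hs
      rcases lt_or_ge l 1 with hl1 | hl1
      · have hq : 0 < 1 / r := by positivity
        have h1 := dec_aux hq hL' (hdec x trivial) hspos hl0 hl1
        rw [← ENNReal.coe_rpow_of_nonneg _ hq.le, hlp] at h1
        have h2 : (L' : ℝ≥0∞) * ((2 ^ k : ℝ≥0) : ℝ≥0∞) ≤ L' * φ x (l * s) := by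
          refine le_trans ?_ h1
          calc (L' : ℝ≥0∞) * ((2 ^ k : ℝ≥0) : ℝ≥0∞) = ((2 ^ (k + (i : ℤ)) : ℝ≥0) : ℝ≥0∞) * ((L' / 2 ^ i : ℝ≥0) : ℝ≥0∞) := by
                rw [← ENNReal.coe_mul, ← ENNReal.coe_mul, zpow_add₀ two_ne_zero, zpow_natCast]
                congr 1; field_simp
            _ ≤ _ := by gcongr
        exact (ENNReal.mul_le_mul_iff_right (by exact_mod_cast hLpos'.ne') ENNReal.coe_ne_top).1 h2
      · refine le_trans ?_ (hs.trans (hφ.mono x trivial (le_mul_of_one_le_left' hl1)))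
        rw [ENNReal.coe_le_coe]
        exact zpow_le_zpow_right₀ one_le_two (by omega)
    rw [← coe_dSeq hφ, ← coe_dSeq hφ, ← ENNReal.coe_mul, ENNReal.coe_le_coe] at key
    refine key.trans ?_
    rw [hl]
    gcongr
    exact le_max_right _ _

lemma aemeasurable_phiInv {φ : RSp n → ℝ≥0 → ℝ≥0∞} (hφ : IsWeakPhi Set.univ φ) (v : ℝ≥0∞) :
    AEMeasurable (fun x => phiInv φ x v) volume := by
  have heq : (fun x => phiInv φ x v) =
      fun x => ⨅ q : ℚ≥0, (if v ≤ φ x (q : ℝ≥0) then (((q : ℝ≥0) : ℝ≥0∞)) else ⊤) := by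
    funext x
    apply le_antisymm
    · apply le_iInf
      intro q
      split_ifs with h
      · exact phiInv_le' h
      · exact le_top
    · apply le_phiInv'
      intro s hs
      apply le_of_forall_gt_imp_ge_of_dense
      intro a ha
      obtain ⟨q, hq1, hq2⟩ := ENNReal.lt_iff_exists_nnreal_btwn.1 ha
      obtain ⟨w, hw1, hw2⟩ := exists_rat_btwn (show (s : ℝ) < (q : ℝ) by exact_mod_cast hq1)
      have hw0 : 0 ≤ w := by
        have : (0 : ℝ) ≤ w := s.coe_nonneg.trans hw1.le
        exact_mod_cast this
      lift w to ℚ≥0 using hw0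
      have hw1' : s ≤ (w : ℝ≥0) := by
        rw [← NNReal.coe_le_coe]; exact_mod_cast hw1.le
      have hw2' : (w : ℝ≥0) ≤ q := by
        rw [← NNReal.coe_le_coe]; exact_mod_cast hw2.le
      refine (iInf_le _ w).trans ?_
      rw [if_pos (hs.trans (hφ.mono x trivial hw1'))]
      exact (ENNReal.coe_le_coe.2 hw2').trans hq2.le
  rw [heq]
  apply AEMeasurable.iInf
  intro q
  have h1 : AEMeasurable (fun x => φ x (q : ℝ≥0)) volume := by
    have := hφ.meas (fun _ => (q : ℝ≥0)) measurable_const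
    rwa [Measure.restrict_univ] at this
  have h2 : Measurable (fun u : ℝ≥0∞ => if v ≤ u then (((q : ℝ≥0) : ℝ≥0∞)) else ⊤) :=
    Measurable.ite measurableSet_Ici measurable_const measurable_const
  exact h2.comp_aemeasurable h1

end

noncomputable section

lemma A2_compare {φ : RSp n → ℝ≥0 → ℝ≥0∞} {φi : ℝ≥0 → ℝ≥0∞} {x y : RSp n}
    {hx hy : ℝ≥0∞} {β s v : ℝ≥0} (hβ : 0 < β)
    (h1 : ∀ t : ℝ≥0, φi t ≤ (s : ℝ≥0∞) → φ x (β * t) ≤ φi t + hx)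
    (h2 : ∀ t : ℝ≥0, φ y t ≤ (s : ℝ≥0∞) → φi (β * t) ≤ φ y t + hy)
    (hvs : 2 * v ≤ s) (hxv : hx ≤ v) (hyv : hy ≤ v) :
    phiInv φ y v ≤ ((β⁻¹ * β⁻¹ : ℝ≥0) : ℝ≥0∞) * phiInv φ x ((4 * v : ℝ≥0) : ℝ≥0∞) := by
  apply phiInv_le_mul (by positivity)
  intro t ht
  by_contra hcon
  rw [not_le] at hcon
  have hlift : φ y (β⁻¹ * β⁻¹ * t) ≠ ⊤ := hcon.ne_top
  have hvs' : (2 : ℝ≥0∞) * v ≤ s := by exact_mod_cast hvs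
  have e1 : φ y (β⁻¹ * β⁻¹ * t) ≤ s := by
    refine hcon.le.trans (le_trans ?_ hvs')
    rw [two_mul]; exact le_self_add
  have e2 := h2 _ e1
  have e3 : β * (β⁻¹ * β⁻¹ * t) = β⁻¹ * t := by field_simp
  rw [e3] at e2
  have e4 : φi (β⁻¹ * t) ≤ 2 * v := by
    rw [two_mul]; exact e2.trans (add_le_add hcon.le hyv)
  have e5 := h1 _ (e4.trans hvs')
  rw [mul_inv_cancel_left₀ hβ.ne'] at e5
  have e6 : ((4 * v : ℝ≥0) : ℝ≥0∞) ≤ ((3 * v : ℝ≥0) : ℝ≥0∞) := by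
    refine (ht.trans e5).trans ((add_le_add e4 hxv).trans (le_of_eq ?_))
    push_cast; ring
  have e7 : 4 * v ≤ 3 * v := by exact_mod_cast e6
  have hv : 0 < v := by exact_mod_cast (pos_of_gt hcon)
  exact absurd e7 (not_le.2 (by gcongr; norm_num))

lemma volume_univ_RSp (hn : 0 < n) : (volume : Measure (RSp n)) Set.univ = ⊤ := by
  haveI : Nonempty (Fin n) := ⟨⟨0, hn⟩⟩
  haveI : Nontrivial (RSp n) := inferInstance
  haveI : NoncompactSpace (RSp n) := NormedSpace.noncompactSpace ℝ (RSp n)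
  exact measure_univ_of_isAddLeftInvariant _

lemma exists_limit (hn : 0 < n) {φ : RSp n → ℝ≥0 → ℝ≥0∞} (hφ : IsWeakPhi Set.univ φ) {C A B β : ℝ≥0}
    (hB : B ≤ 1) (hgood : ∀ x, GoodSeq C A B (dSeq φ x)) (hβ : 0 < β)
    (hA0 : ∀ᵐ x ∂(volume : Measure (RSp n)), β ≤ dSeq φ x 0 ∧ dSeq φ x 0 ≤ β⁻¹) (ha2 : A2 φ) :
    ∃ D : ℤ → ℝ≥0, GoodSeq C A B D ∧ β ≤ D 0 ∧ D 0 ≤ β⁻¹ ∧ ∃ h : RSp n → ℝ≥0∞,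
      ∫⁻ x, h x < ∞ ∧ ∃ M : ℝ≥0, ∀ᵐ x ∂(volume : Measure (RSp n)), ∀ k : ℤ, k ≤ 0 →
        h x ≤ ((2 ^ k : ℝ≥0) : ℝ≥0∞) → dSeq φ x k ≤ M * D k ∧ D k ≤ M * dSeq φ x k := by
  obtain ⟨φi, -, h, hInt, -, γ, hγ, -, s, hs, hA2⟩ := ha2
  obtain ⟨K, hK⟩ := pow_unbounded_of_one_lt (2 / s) (one_lt_two (α := ℝ≥0))
  set M : ℝ≥0 := C * A ^ K * (γ⁻¹ * γ⁻¹) * (C * A ^ 2) * C with hM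
  set h' : RSp n → ℝ≥0∞ := fun x => ((2 ^ K : ℝ≥0) : ℝ≥0∞) * h x with hh'
  have hInt' : ∫⁻ x, h' x < ∞ := by
    rw [hh', lintegral_const_mul' _ _ ENNReal.coe_ne_top]
    exact ENNReal.mul_lt_top ENNReal.coe_lt_top hInt
  -- the set where (A2) holds
  set P : RSp n → Prop := fun x => ∀ t : ℝ≥0,
      (φi t ≤ (s : ℝ≥0∞) → φ x (γ * t) ≤ φi t + h x) ∧
      (φ x t ≤ (s : ℝ≥0∞) → φi (γ * t) ≤ φ x t + h x) with hP
  have hcomp : ∀ x y, P x → P y → ∀ k : ℤ, k ≤ 0 → h' x ≤ ((2 ^ k : ℝ≥0) : ℝ≥0∞) →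
      h' y ≤ ((2 ^ k : ℝ≥0) : ℝ≥0∞) → dSeq φ y k ≤ M * dSeq φ x k := by
    intro x y hPx hPy k hk hxk hyk
    have hpow : (2 : ℝ≥0) ^ k = 2 ^ K * 2 ^ (k - (K : ℤ)) := by
      rw [← zpow_natCast, ← zpow_add₀ two_ne_zero]; congr 1; ring
    have hcancel : ∀ z, h' z ≤ ((2 ^ k : ℝ≥0) : ℝ≥0∞) → h z ≤ ((2 ^ (k - (K : ℤ)) : ℝ≥0) : ℝ≥0∞) := by
      intro z hz
      rw [hpow, ENNReal.coe_mul] at hz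
      refine (ENNReal.mul_le_mul_iff_right ?_ ENNReal.coe_ne_top).1 hz
      have : (2 : ℝ≥0) ^ K ≠ 0 := by positivity
      exact_mod_cast this
    have hvs : 2 * (2 : ℝ≥0) ^ (k - (K : ℤ)) ≤ s := by
      have h1 : (2 : ℝ≥0) ^ (k - (K : ℤ)) ≤ 2 ^ (-(K : ℤ)) :=
        zpow_le_zpow_right₀ one_le_two (by omega)
      rw [zpow_neg, zpow_natCast] at h1
      calc 2 * (2 : ℝ≥0) ^ (k - (K : ℤ)) ≤ 2 * (2 ^ K)⁻¹ := by gcongr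
        _ = 2 / 2 ^ K := by rw [div_eq_mul_inv]
        _ ≤ s := by
          rw [div_le_iff₀ (by positivity)]
          rw [div_lt_iff₀ hs] at hK
          rw [mul_comm]; exact hK.le
    have h1 := A2_compare hγ (fun t => (hPx t).1) (fun t => (hPy t).2) hvs (hcancel x hxk) (hcancel y hyk)
    have h4 : 4 * (2 : ℝ≥0) ^ (k - (K : ℤ)) = 2 ^ (k - (K : ℤ) + 2) := by
      rw [zpow_add₀ two_ne_zero, mul_comm]; norm_num
    rw [h4, ← coe_dSeq hφ, ← coe_dSeq hφ, ← ENNReal.coe_mul, ENNReal.coe_le_coe] at h1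
    have g1 := (hgood y).up (k - K) K
    have g2 := (hgood x).up (k - K) 2
    have g3 := (hgood x).dn (k - K) K
    rw [sub_add_cancel] at g1 g3
    calc dSeq φ y k ≤ C * A ^ K * dSeq φ y (k - K) := g1
      _ ≤ C * A ^ K * (γ⁻¹ * γ⁻¹ * (C * A ^ 2 * (C * 1 * dSeq φ x k))) := by
        gcongr
        refine h1.trans ?_
        gcongr
        refine (show dSeq φ x (k - K + 2) ≤ _ from g2).trans ?_
        gcongr
        refine g3.trans ?_
        gcongr
        exact pow_le_one₀ zero_le hB
      _ = _ := by rw [hM]; ring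
  -- the filter
  set F : Filter (RSp n) := ae volume ⊓ comap h' (nhds 0) with hF
  have hFne : F.NeBot := by
    rw [hF, Filter.inf_neBot_iff]
    intro S hS T hT
    by_contra hemp
    obtain ⟨U, hU, hUT⟩ := Filter.mem_comap.1 hT
    obtain ⟨ε, hε, hεU⟩ := ENNReal.nhds_zero_basis.mem_iff.1 hU
    have h1 : ∀ᵐ x ∂(volume : Measure (RSp n)), ε ≤ h' x := by
      filter_upwards [hS] with x hx
      by_contra hc
      rw [not_le] at hc
      exact hemp ⟨x, hx, hUT (hεU hc)⟩
    have h2 := lintegral_mono_ae h1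
    rw [lintegral_const, volume_univ_RSp hn, ENNReal.mul_top hε.ne'] at h2
    exact absurd hInt' (not_lt.2 h2)
  have hFae : ∀ {p : RSp n → Prop}, (∀ᵐ x ∂(volume : Measure (RSp n)), p x) → ∀ᶠ x in F, p x :=
    fun hp => Filter.Eventually.filter_mono inf_le_left hp
  have hFh : ∀ k : ℤ, ∀ᶠ x in F, h' x ≤ ((2 ^ k : ℝ≥0) : ℝ≥0∞) := by
    intro k
    have h1 : ∀ᶠ u in nhds (0 : ℝ≥0∞), u ≤ ((2 ^ k : ℝ≥0) : ℝ≥0∞) := by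
      apply eventually_le_nhds
      have : 0 < (2 : ℝ≥0) ^ k := by positivity
      exact_mod_cast this
    exact (h1.comap h').filter_mono inf_le_right
  set E : ℤ → ℝ≥0∞ := fun k => limsup (fun y => (dSeq φ y k : ℝ≥0∞)) F with hE
  have hup : ∀ (k : ℤ) (i : ℕ), E (k + i) ≤ ((C * A ^ i : ℝ≥0) : ℝ≥0∞) * E k := by
    intro k i
    simp only [hE]
    rw [← ENNReal.limsup_const_mul_of_ne_top ENNReal.coe_ne_top]
    apply Filter.limsup_le_limsup (Eventually.of_forall ?_)
    intro y
    rw [← ENNReal.coe_mul, ENNReal.coe_le_coe]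
    exact (hgood y).up k i
  have hdn : ∀ (k : ℤ) (i : ℕ), E k ≤ ((C * B ^ i : ℝ≥0) : ℝ≥0∞) * E (k + i) := by
    intro k i
    simp only [hE]
    rw [← ENNReal.limsup_const_mul_of_ne_top ENNReal.coe_ne_top]
    apply Filter.limsup_le_limsup (Eventually.of_forall ?_)
    intro y
    rw [← ENNReal.coe_mul, ENNReal.coe_le_coe]
    exact (hgood y).dn k i
  have hE0 : (β : ℝ≥0∞) ≤ E 0 ∧ E 0 ≤ ((β⁻¹ : ℝ≥0) : ℝ≥0∞) := by
    constructor
    · refine Filter.le_limsup_of_frequently_le (Eventually.frequently ?_)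
      filter_upwards [hFae hA0] with y hy
      exact_mod_cast hy.1
    · refine Filter.limsup_le_of_le (h := ?_)
      filter_upwards [hFae hA0] with y hy
      exact_mod_cast hy.2
  have hE0top : E 0 ≠ ⊤ := (hE0.2.trans_lt ENNReal.coe_lt_top).ne
  have hE0pos : E 0 ≠ 0 := ((ENNReal.coe_pos.2 hβ).trans_le hE0.1).ne'
  have hEtop : ∀ k, E k ≠ ⊤ := by
    intro k
    rcases le_total 0 k with hk | hk
    · have := hup 0 k.toNat
      rw [show (0 : ℤ) + (k.toNat : ℤ) = k by omega] at this
      exact (this.trans_lt (ENNReal.mul_lt_top ENNReal.coe_lt_top hE0top.lt_top)).ne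
    · have := hdn k (-k).toNat
      rw [show k + ((-k).toNat : ℤ) = 0 by omega] at this
      exact (this.trans_lt (ENNReal.mul_lt_top ENNReal.coe_lt_top hE0top.lt_top)).ne
  have hEpos : ∀ k, E k ≠ 0 := by
    intro k hk0
    rcases le_total 0 k with hk | hk
    · have := hdn 0 k.toNat
      rw [show (0 : ℤ) + (k.toNat : ℤ) = k by omega, hk0, mul_zero] at this
      exact hE0pos (nonpos_iff_eq_zero.1 this)
    · have := hup k (-k).toNat
      rw [show k + ((-k).toNat : ℤ) = 0 by omega, hk0, mul_zero] at this
      exact hE0pos (nonpos_iff_eq_zero.1 this)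
  have hco : ∀ k, ((E k).toNNReal : ℝ≥0∞) = E k := fun k => ENNReal.coe_toNNReal (hEtop k)
  refine ⟨fun k => (E k).toNNReal, ⟨?_, ?_, ?_⟩, ?_, ?_, h', hInt', M, ?_⟩
  · intro k
    exact ENNReal.toNNReal_pos (hEpos k) (hEtop k)
  · intro k i
    rw [← ENNReal.coe_le_coe, ENNReal.coe_mul, hco, hco]
    exact hup k i
  · intro k i
    rw [← ENNReal.coe_le_coe, ENNReal.coe_mul, hco, hco]
    exact hdn k i
  · rw [← ENNReal.coe_le_coe, hco]
    exact hE0.1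
  · rw [← ENNReal.coe_le_coe, hco]
    exact hE0.2
  · filter_upwards [hA2] with x hx k hk hxk
    constructor
    · rw [← ENNReal.coe_le_coe, ENNReal.coe_mul, hco]
      simp only [hE]
      rw [← ENNReal.limsup_const_mul_of_ne_top ENNReal.coe_ne_top]
      refine Filter.le_limsup_of_frequently_le (Eventually.frequently ?_)
      filter_upwards [hFae hA2, hFh k] with y hy hyk
      rw [← ENNReal.coe_mul, ENNReal.coe_le_coe]
      exact hcomp y x hy hx k hk hyk hxk
    · rw [← ENNReal.coe_le_coe, ENNReal.coe_mul, hco]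
      refine Filter.limsup_le_of_le (h := ?_)
      filter_upwards [hFae hA2, hFh k] with y hy hyk
      rw [← ENNReal.coe_mul, ENNReal.coe_le_coe]
      exact hcomp x y hx hy k hk hxk hyk

lemma weakEquiv_fReg {f : RSp n → ℝ≥0 → ℝ≥0∞} (hf : IsWeakPhi Set.univ f) {C A B : ℝ≥0}
    (hA : A < 2) (hB : B < 1) {u e : RSp n → ℤ → ℝ≥0}
    (hu : ∀ x, GoodSeq C A B (u x)) {C' : ℝ≥0} (he : ∀ x, GoodSeq C' A B (e x)) {N M : ℝ≥0}
    (h1 : ∀ x k, dSeq f x k ≤ N * u x k) (h2 : ∀ x k, u x k ≤ N * dSeq f x k)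
    (h : RSp n → ℝ≥0∞) (hInt : ∫⁻ x, h x < ∞)
    (H : ∀ᵐ x ∂(volume : Measure (RSp n)), ∀ k : ℤ, h x ≤ ((2 ^ k : ℝ≥0) : ℝ≥0∞) →
      u x k ≤ M * e x k ∧ e x k ≤ M * u x k) :
    PhiWeakEquiv f (fun x => fReg (e x)) := by
  obtain ⟨R, -, hR⟩ := fReg_inv (n := n) C' A B hA hB
  refine weakEquiv_of_inv h hInt (M := max 1 (max (R * M * N) (N * C * A * M * R))) (le_max_left _ _)
    (fun x => hf.zero x trivial) (fun x => fReg_zero _) (fun x => hf.mono x trivial)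
    (fun x => fReg_mono _) ?_
  filter_upwards [H] with x hx k hk
  have hkk : ((2 ^ k : ℝ≥0) : ℝ≥0∞) ≤ ((2 ^ (k + 1) : ℝ≥0) : ℝ≥0∞) := by
    rw [ENNReal.coe_le_coe]; exact zpow_le_zpow_right₀ one_le_two (by omega)
  constructor
  · refine (hR e x (he x) k _ hkk le_rfl).1.trans ?_
    rw [← coe_dSeq hf, ← ENNReal.coe_mul, ← ENNReal.coe_mul, ENNReal.coe_le_coe]
    calc R * e x k ≤ R * (M * (N * dSeq f x k)) := by
          gcongr; refine (hx k hk).2.trans ?_; gcongr; exact h2 x k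
      _ = (R * M * N) * dSeq f x k := by ring
      _ ≤ _ := by gcongr; exact (le_max_left _ _).trans (le_max_right _ _)
  · rw [← coe_dSeq hf]
    have e1 : dSeq f x (k + 1) ≤ (N * C * A * M) * e x k := by
      calc dSeq f x (k + 1) ≤ N * (C * A ^ 1 * (M * e x k)) := by
            refine (h1 x _).trans ?_
            gcongr
            refine (show u x (k + 1) ≤ _ from (hu x).up k 1).trans ?_
            gcongr
            exact (hx k hk).1
        _ = _ := by ring
    calc (dSeq f x (k + 1) : ℝ≥0∞) ≤ ((N * C * A * M : ℝ≥0) : ℝ≥0∞) * e x k := by exact_mod_cast e1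
      _ ≤ ((N * C * A * M : ℝ≥0) : ℝ≥0∞) * (R * phiInv (fun x => fReg (e x)) x ((2 ^ k : ℝ≥0) : ℝ≥0∞)) := by
        gcongr
        exact (hR e x (he x) k _ le_rfl hkk).2
      _ = ((N * C * A * M * R : ℝ≥0) : ℝ≥0∞) * phiInv (fun x => fReg (e x)) x ((2 ^ k : ℝ≥0) : ℝ≥0∞) := by
        push_cast; ring
      _ ≤ _ := by
        gcongr; exact (le_max_right _ _).trans (le_max_right _ _)

end

/-- existence of regularized strong Φ-functions `φ̃, ψ̃` which are weakly
equivalent to `φ, ψ`, satisfy the fractional inverse relation, and for which the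
`(A1)`-type estimate for `ψ̃` holds on cubes of arbitrary size for `t ∈ [0, 1/|Q|]`. -/
theorem statement4 {n : ℕ} (hn : 0 < n) (p q α r : ℝ)
    (φ ψ : RSp n → ℝ≥0 → ℝ≥0∞)
    (hp : 1 < p) (hpq : p ≤ q) (hα : α / (n : ℝ) = 1 / p - 1 / q)
    (hφ : IsWeakPhi Set.univ φ) (hψ : IsWeakPhi Set.univ ψ)
    (hinv : FracInvRel α φ ψ)
    (hr₁ : α / (n : ℝ) < r) (hr₂ : r ≤ 1 / p)
    (ha0 : A0 Set.univ φ) (ha1 : A1 φ) (ha2 : A2 φ)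
    (hainc : AInc p Set.univ φ) (hadec : ADec (1 / r) Set.univ φ) :
    ∃ φt ψt : RSp n → ℝ≥0 → ℝ≥0∞,
      IsStrongPhi Set.univ φt ∧ IsStrongPhi Set.univ ψt ∧
      PhiWeakEquiv φ φt ∧ PhiWeakEquiv ψ ψt ∧
      FracInvRel α φt ψt ∧
      ∃ C : ℝ≥0, ∀ Q : Cube n,
        ∀ᵐ x ∂(volume.restrict Q.set), ∀ᵐ y ∂(volume.restrict Q.set),
          ∀ t : ℝ≥0∞, t ≤ (volume Q.set)⁻¹ →
            phiInv ψt x t ≤ (C : ℝ≥0∞) * phiInv ψt y t := by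
  classical
  have hp0 : 0 < p := by linarith
  have hq0 : 0 < q := by linarith
  have ha : 0 ≤ α / (n : ℝ) := by
    rw [hα, sub_nonneg]
    exact one_div_le_one_div_of_le hp0 hpq
  have hr0 : 0 < r := ha.trans_lt hr₁
  have haq : 1 / p - α / (n : ℝ) = 1 / q := by rw [hα]; ring
  unfold FracInvRel at hinv ⊢
  generalize α / (n : ℝ) = a at *
  obtain ⟨C, hgood⟩ := goodSeq_dSeq hφ hp0 hr0 hainc hadec
  set A : ℝ≥0 := (2 : ℝ≥0) ^ (1 / p) with hAdef
  set B : ℝ≥0 := (2 : ℝ≥0) ^ (-r) with hBdef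
  set τ : ℝ≥0 := (2 : ℝ≥0) ^ a with hτdef
  have hτ : 0 < τ := NNReal.rpow_pos two_pos
  have hA : A < 2 := by
    calc A < (2 : ℝ≥0) ^ (1 : ℝ) :=
          NNReal.rpow_lt_rpow_of_exponent_lt one_lt_two (by rw [div_lt_one hp0]; exact hp)
      _ = 2 := NNReal.rpow_one _
  have hB : B < 1 := NNReal.rpow_lt_one_of_one_lt_of_neg one_lt_two (by linarith)
  have hA' : A / τ < 2 := by
    rw [hAdef, hτdef, ← NNReal.rpow_sub two_ne_zero, haq]
    calc (2 : ℝ≥0) ^ (1 / q) < (2 : ℝ≥0) ^ (1 : ℝ) :=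
          NNReal.rpow_lt_rpow_of_exponent_lt one_lt_two (by rw [div_lt_one hq0]; linarith)
      _ = 2 := NNReal.rpow_one _
  have hB' : B * τ < 1 := by
    rw [hBdef, hτdef, ← NNReal.rpow_add two_ne_zero]
    exact NNReal.rpow_lt_one_of_one_lt_of_neg one_lt_two (by linarith)
  have hτk : ∀ k : ℤ, ((2 : ℝ≥0) ^ k) ^ a = τ ^ k := by
    intro k
    rw [hτdef, ← NNReal.rpow_intCast, ← NNReal.rpow_intCast, ← NNReal.rpow_mul, ← NNReal.rpow_mul,
      mul_comm]
  obtain ⟨β, hβ, hβ1, ha0⟩ := ha0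
  rw [Measure.restrict_univ] at ha0
  set good : RSp n → Prop := fun x => β ≤ dSeq φ x 0 ∧ dSeq φ x 0 ≤ β⁻¹ with hgd
  have hA0 : ∀ᵐ x ∂(volume : Measure (RSp n)), good x := by
    filter_upwards [ha0] with x hx
    have h0 := coe_dSeq hφ x 0
    rw [zpow_zero, ENNReal.coe_one] at h0
    rw [← h0, ← ENNReal.coe_inv hβ.ne', ENNReal.coe_le_coe, ENNReal.coe_le_coe] at hx
    exact hx
  obtain ⟨D, hD, hD1, hD2, h, hInt, M, hM⟩ := exists_limit hn hφ hB.le hgood hβ hA0 ha2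
  set e : RSp n → ℤ → ℝ≥0 := fun x k => if 0 ≤ k then (if good x then dSeq φ x k else D k) else D k
    with he
  set c : ℝ≥0 := β⁻¹ * β⁻¹ with hc
  have hβinv : 1 ≤ β⁻¹ := (one_le_inv₀ hβ).2 hβ1
  have hc1 : 1 ≤ c := one_le_mul hβinv hβinv
  have hcc : ∀ u v : ℝ≥0, u ≤ β⁻¹ → β ≤ v → u ≤ c * v := by
    intro u v hu hv
    calc u ≤ β⁻¹ := hu
      _ = c * β := by rw [hc]; field_simp
      _ ≤ c * v := by gcongr
  set C' : ℝ≥0 := C * C * c with hC'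
  have hegood : ∀ x, GoodSeq C' A B (e x) := by
    intro x
    by_cases hx : good x
    · have := hD.splice (hgood x) hc1 (hcc _ _ hD2 hx.1) (hcc _ _ hx.2 hD1)
      have heq : e x = fun k => if 0 ≤ k then dSeq φ x k else D k := by
        funext k; simp only [he, hx, if_true]
      rw [heq]; exact this
    · have := hD.splice hD hc1 (hcc _ _ hD2 hD1) (hcc _ _ hD2 hD1)
      have heq : e x = fun k => if 0 ≤ k then D k else D k := by
        funext k; simp only [he, hx, if_false]
      rw [heq]; exact this
  have hemeas : ∀ k, AEMeasurable (fun x => e x k) volume := by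
    intro k
    by_cases hk : 0 ≤ k
    · have h1 : AEMeasurable (fun x => dSeq φ x k) volume :=
        (aemeasurable_phiInv hφ _).ennreal_toNNReal
      refine h1.congr ?_
      filter_upwards [hA0] with x hx
      simp only [he, hk, hx, if_true]
    · simp only [he, hk, if_false]
      exact aemeasurable_const
  set b : RSp n → ℤ → ℝ≥0 := fun x k => e x k / τ ^ k with hb
  have hbgood : ∀ x, GoodSeq C' (A / τ) (B * τ) (b x) := fun x => (hegood x).geom hτ
  have hbmeas : ∀ k, AEMeasurable (fun x => b x k) volume :=
    fun k => (hemeas k).div aemeasurable_const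
  set u : RSp n → ℤ → ℝ≥0 := fun x k => dSeq φ x k / τ ^ k with hu
  have hugood : ∀ x, GoodSeq C (A / τ) (B * τ) (u x) := fun x => (hgood x).geom hτ
  have hcmp : ∀ᵐ x ∂(volume : Measure (RSp n)), ∀ k : ℤ, h x ≤ ((2 ^ k : ℝ≥0) : ℝ≥0∞) →
      dSeq φ x k ≤ max 1 M * e x k ∧ e x k ≤ max 1 M * dSeq φ x k := by
    filter_upwards [hA0, hM] with x hx hMx k hk
    by_cases hk0 : 0 ≤ k
    · have : e x k = dSeq φ x k := by simp only [he, hk0, hx, if_true]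
      rw [this]
      have h1 : dSeq φ x k ≤ max 1 M * dSeq φ x k :=
        le_mul_of_one_le_left' (le_max_left _ _)
      exact ⟨h1, h1⟩
    · have : e x k = D k := by simp only [he, hk0, if_false]
      rw [this]
      obtain ⟨h1, h2⟩ := hMx k (by omega) hk
      exact ⟨h1.trans (by gcongr; exact le_max_right _ _),
        h2.trans (by gcongr; exact le_max_right _ _)⟩
  obtain ⟨R, hR1, hR⟩ := fReg_inv (n := n) C' A B hA hB
  obtain ⟨R', hR'1, hR'⟩ := fReg_inv (n := n) C' (A / τ) (B * τ) hA' hB'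
  refine ⟨fun x => fReg (e x), fun x => fReg (b x), isStrongPhi_fReg hegood hA hB hemeas,
    isStrongPhi_fReg hbgood hA' hB' hbmeas, ?_, ?_, ?_, ?_⟩
  · exact weakEquiv_fReg hφ hA hB hgood hegood (N := 1) (M := max 1 M) (fun x k => by simp)
      (fun x k => by simp) h hInt hcmp
  · obtain ⟨c₁, c₂, hc₁, hrel⟩ := hinv
    have hrel' : ∀ x (k : ℤ), c₁ * (τ ^ k * dSeq ψ x k) ≤ dSeq φ x k ∧
        dSeq φ x k ≤ c₂ * (τ ^ k * dSeq ψ x k) := by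
      intro x k
      have h1 := hrel x (2 ^ k) (by positivity)
      rw [← coe_dSeq hψ, ← coe_dSeq hφ, ← ENNReal.coe_rpow_of_nonneg _ ha, hτk] at h1
      exact_mod_cast h1
    refine weakEquiv_fReg hψ hA' hB' hugood hbgood (N := max c₁⁻¹ c₂) (M := max 1 M) ?_ ?_ h hInt ?_
    · intro x k
      have h1 := (hrel' x k).1
      calc dSeq ψ x k = c₁⁻¹ * ((c₁ * (τ ^ k * dSeq ψ x k)) / τ ^ k) := by field_simp
        _ ≤ c₁⁻¹ * (dSeq φ x k / τ ^ k) := by gcongr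
        _ ≤ _ := by gcongr; exact le_max_left _ _
    · intro x k
      have h1 := (hrel' x k).2
      calc dSeq φ x k / τ ^ k ≤ (c₂ * (τ ^ k * dSeq ψ x k)) / τ ^ k := by gcongr
        _ = c₂ * dSeq ψ x k := by field_simp
        _ ≤ _ := by gcongr; exact le_max_right _ _
    · filter_upwards [hcmp] with x hx k hk
      obtain ⟨h1, h2⟩ := hx k hk
      simp only [hu, hb]
      rw [← mul_div_assoc, ← mul_div_assoc]
      exact ⟨by gcongr, by gcongr⟩
  · have hRR : 0 < τ * R' * R := mul_pos (mul_pos hτ (zero_lt_one.trans_le hR'1)) (zero_lt_one.trans_le hR1)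
    refine ⟨(τ * R' * R)⁻¹, R * R', inv_pos.2 hRR, ?_⟩
    intro x t ht
    obtain ⟨k, hk1, hk2⟩ := NNReal.exists_mem_Ico_zpow (y := 2) ht.ne' one_lt_two
    have hk1' : ((2 ^ k : ℝ≥0) : ℝ≥0∞) ≤ t := by exact_mod_cast hk1
    have hk2' : (t : ℝ≥0∞) ≤ ((2 ^ (k + 1) : ℝ≥0) : ℝ≥0∞) := by
      rw [ENNReal.coe_le_coe]; exact hk2.le
    obtain ⟨x1, x2⟩ := hR e x (hegood x) k t hk1' hk2'
    obtain ⟨y1, y2⟩ := hR' b x (hbgood x) k t hk1' hk2'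
    have t1 : τ ^ k ≤ t ^ a := by rw [← hτk]; exact NNReal.rpow_le_rpow hk1 ha
    have t2 : t ^ a ≤ τ ^ k * τ := by
      rw [← zpow_add_one₀ hτ.ne', ← hτk]; exact NNReal.rpow_le_rpow hk2.le ha
    have hbe : τ ^ k * b x k = e x k := by simp only [hb]; field_simp
    rw [← ENNReal.coe_rpow_of_nonneg _ ha]
    constructor
    · rw [ENNReal.coe_inv hRR.ne', mul_comm, ← div_eq_mul_inv]
      apply ENNReal.div_le_of_le_mul'
      calc ((t ^ a : ℝ≥0) : ℝ≥0∞) * phiInv (fun x => fReg (b x)) x t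
          ≤ ((τ ^ k * τ : ℝ≥0) : ℝ≥0∞) * (R' * b x k) := by gcongr
        _ = ((τ * R' : ℝ≥0) : ℝ≥0∞) * ((τ ^ k * b x k : ℝ≥0) : ℝ≥0∞) := by
            simp only [ENNReal.coe_mul]; ring
        _ ≤ ((τ * R' : ℝ≥0) : ℝ≥0∞) * (R * phiInv (fun x => fReg (e x)) x t) := by
            rw [hbe]; gcongr
        _ = _ := by simp only [ENNReal.coe_mul]; ring
    · calc phiInv (fun x => fReg (e x)) x t ≤ (R : ℝ≥0∞) * ((τ ^ k * b x k : ℝ≥0) : ℝ≥0∞) := by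
            rw [hbe]; exact x1
        _ ≤ (R : ℝ≥0∞) * (((t ^ a : ℝ≥0) : ℝ≥0∞) * (R' * phiInv (fun x => fReg (b x)) x t)) := by
            rw [ENNReal.coe_mul]; gcongr
        _ = _ := by rw [ENNReal.coe_mul]; ring
  · obtain ⟨δ, hδ, hδ1, hA1⟩ := ha1
    refine ⟨R' * δ⁻¹ * R', ?_⟩
    intro Q
    by_cases hQ0 : volume Q.set = 0
    · rw [Measure.restrict_eq_zero.2 hQ0]
      simp
    have hcube : ∀ᵐ x ∂(volume.restrict Q.set), ∀ᵐ y ∂(volume.restrict Q.set),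
        ∀ k : ℤ, 0 ≤ k → ((2 ^ k : ℝ≥0) : ℝ≥0∞) ≤ (volume Q.set)⁻¹ →
          dSeq φ x k ≤ δ⁻¹ * dSeq φ y k := by
      by_cases hQ1 : volume Q.set ≤ 1
      · filter_upwards [hA1 Q hQ1] with x hx
        filter_upwards [hx] with y hy k hk hkQ
        have h1 := hy ((2 ^ k : ℝ≥0) : ℝ≥0∞)
          (by exact_mod_cast one_le_zpow₀ (one_le_two (α := ℝ≥0)) hk) hkQ
        rw [← coe_dSeq hφ, ← coe_dSeq hφ, ← ENNReal.coe_mul, ENNReal.coe_le_coe] at h1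
        calc dSeq φ x k = δ⁻¹ * (δ * dSeq φ x k) := by rw [inv_mul_cancel_left₀ hδ.ne']
          _ ≤ _ := by gcongr
      · refine Eventually.of_forall fun x => Eventually.of_forall fun y k hk hkQ => ?_
        exfalso
        apply hQ1
        have h1 : (1 : ℝ≥0∞) ≤ (volume Q.set)⁻¹ :=
          le_trans (by exact_mod_cast one_le_zpow₀ (one_le_two (α := ℝ≥0)) hk) hkQ
        exact ENNReal.one_le_inv.1 h1
    filter_upwards [hcube, ae_restrict_of_ae hA0] with x hx hgx
    filter_upwards [hx, ae_restrict_of_ae hA0] with y hy hgy t ht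
    have httop : t ≠ ⊤ := ne_top_of_le_ne_top (ENNReal.inv_ne_top.2 hQ0) ht
    by_cases ht0 : t = 0
    · subst ht0
      refine (phiInv_le' (s := 0) ?_).trans ?_
      · exact zero_le
      · rw [ENNReal.coe_zero]; exact zero_le
    lift t to ℝ≥0 using httop
    obtain ⟨k, hk1, hk2⟩ := NNReal.exists_mem_Ico_zpow (y := 2) (by exact_mod_cast ht0 : t ≠ 0) one_lt_two
    have hk1' : ((2 ^ k : ℝ≥0) : ℝ≥0∞) ≤ t := by rw [ENNReal.coe_le_coe]; exact hk1
    have hk2' : (t : ℝ≥0∞) ≤ ((2 ^ (k + 1) : ℝ≥0) : ℝ≥0∞) := by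
      rw [ENNReal.coe_le_coe]; exact hk2.le
    have x1 := (hR' b x (hbgood x) k t hk1' hk2').1
    have y2 := (hR' b y (hbgood y) k t hk1' hk2').2
    have hexy : e x k ≤ δ⁻¹ * e y k := by
      by_cases hk0 : 0 ≤ k
      · simp only [he, hk0, hgx, hgy, if_true]
        exact hy k hk0 (hk1'.trans ht)
      · simp only [he, hk0, if_false]
        exact le_mul_of_one_le_left' ((one_le_inv₀ hδ).2 hδ1.le)
    have hbxy : b x k ≤ δ⁻¹ * b y k := by
      simp only [hb]
      rw [← mul_div_assoc]
      gcongr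
    calc phiInv (fun x => fReg (b x)) x t ≤ R' * b x k := x1
      _ ≤ R' * ((δ⁻¹ * b y k : ℝ≥0) : ℝ≥0∞) := by gcongr
      _ = ((R' * δ⁻¹ : ℝ≥0) : ℝ≥0∞) * b y k := by simp only [ENNReal.coe_mul]; ring
      _ ≤ ((R' * δ⁻¹ : ℝ≥0) : ℝ≥0∞) * (R' * phiInv (fun x => fReg (b x)) y t) := by gcongr
      _ = _ := by simp only [ENNReal.coe_mul]; ring
end

section
/- Let 1 < p ≤ q < ∞, α/n = 1/p − 1/q, and φ, ψ ∈ Φ_w(ℝⁿ) be such that φ⁻¹(x,t) ≈ t^{α/n}·ψ⁻¹(x,t). Let r ∈ (α/n, 1/p] and assume φ satisfies (A0), (A1), (A2), (aInc)_p and (aDec)_{1/r}. Then the fractional maximal operator M_α is bounded from L^φ(ℝⁿ) to L^ψ(ℝⁿ): there is a constant C with ‖M_α f‖_{L^ψ(ℝⁿ)} ≤ C‖f‖_{L^φ(ℝⁿ)} for all f ∈ L^φ(ℝⁿ). -/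
open MeasureTheory NNReal ENNReal Filter Set

noncomputable section HL

theorem Cube.set_eq_preimage {n : ℕ} (Q : Cube n) :
    Q.set = (@WithLp.ofLp 2 (Fin n → ℝ)) ⁻¹' (Set.Icc (fun i => Q.c i - Q.r) (fun i => Q.c i + Q.r)) := by
  ext y
  simp only [Cube.set, Set.mem_ofPred_eq, Set.mem_preimage, Set.mem_Icc, Pi.le_def, abs_le]
  constructor
  · intro h
    exact ⟨fun i => by linarith [(h i).1], fun i => by linarith [(h i).2]⟩
  · rintro ⟨h1, h2⟩ i
    exact ⟨by linarith [h1 i], by linarith [h2 i]⟩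

theorem Cube.isClosed {n : ℕ} (Q : Cube n) : IsClosed Q.set := by
  rw [Q.set_eq_preimage]
  exact isClosed_Icc.preimage (PiLp.continuous_ofLp 2 _)

theorem Cube.measurable {n : ℕ} (Q : Cube n) : MeasurableSet Q.set := Q.isClosed.measurableSet

theorem Cube.volume_eq {n : ℕ} (Q : Cube n) :
    volume Q.set = ENNReal.ofReal (2 * Q.r) ^ n := by
  rw [Q.set_eq_preimage, (PiLp.volume_preserving_ofLp (Fin n)).measure_preimage
    measurableSet_Icc.nullMeasurableSet, Real.volume_Icc_pi]
  simp only [show ∀ i, Q.c i + Q.r - (Q.c i - Q.r) = 2 * Q.r by intro i; ring]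
  simp

theorem Cube.volume_pos {n : ℕ} (Q : Cube n) : volume Q.set ≠ 0 := by
  rw [Q.volume_eq]
  have := Q.r_pos
  simp [this]

theorem Cube.volume_ne_top {n : ℕ} (Q : Cube n) : volume Q.set ≠ ∞ := by
  rw [Q.volume_eq]; finiteness

/-- scaled cube -/
def Cube.scale {n : ℕ} (Q : Cube n) (k : ℝ) (hk : 0 < k) : Cube n :=
  ⟨Q.c, k * Q.r, mul_pos hk Q.r_pos⟩

theorem Cube.volume_scale {n : ℕ} (Q : Cube n) (k : ℝ) (hk : 0 < k) :
    volume (Q.scale k hk).set = ENNReal.ofReal k ^ n * volume Q.set := by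
  rw [Cube.volume_eq, Cube.volume_eq, ← mul_pow, ← ENNReal.ofReal_mul hk.le]
  congr 2
  simp [Cube.scale]; ring

/-- The enlarged maximal function. -/
def NM {n : ℕ} (g : RSp n → ℝ≥0∞) (x : RSp n) : ℝ≥0∞ :=
  ⨆ (Q : Cube n) (_ : ∀ i, |x i - Q.c i| < 2 * Q.r), (volume Q.set)⁻¹ * ∫⁻ y in Q.set, g y

theorem isOpen_ocube {n : ℕ} (Q : Cube n) : IsOpen {x : RSp n | ∀ i, |x i - Q.c i| < 2 * Q.r} := by
  rw [Set.ofPred_forall]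
  apply isOpen_iInter_of_finite
  intro i
  apply isOpen_lt _ continuous_const
  fun_prop

theorem NM_superlevel {n : ℕ} (g : RSp n → ℝ≥0∞) (l : ℝ≥0∞) :
    {x | l < NM g x} = ⋃ Q ∈ {Q : Cube n | l < (volume Q.set)⁻¹ * ∫⁻ y in Q.set, g y},
      {x : RSp n | ∀ i, |x i - Q.c i| < 2 * Q.r} := by
  ext x
  simp only [NM, lt_iSup_iff, Set.mem_ofPred_eq, Set.mem_iUnion]
  constructor
  · rintro ⟨Q, h, h'⟩; exact ⟨Q, h', h⟩
  · rintro ⟨Q, h, h'⟩; exact ⟨Q, h', h⟩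

theorem NM_measurable {n : ℕ} (g : RSp n → ℝ≥0∞) : Measurable (NM g) := by
  apply measurable_of_Ioi
  intro l
  have := NM_superlevel g l
  change MeasurableSet {x | l < NM g x}
  rw [this]
  exact (isOpen_biUnion fun Q _ => isOpen_ocube Q).measurableSet

theorem le_NM {n : ℕ} (g : RSp n → ℝ≥0∞) (Q : Cube n) (x : RSp n) (hx : x ∈ Q.set) :
    (volume Q.set)⁻¹ * ∫⁻ y in Q.set, g y ≤ NM g x := by
  unfold NM
  refine le_iSup₂_of_le (f := fun (Q : Cube n) (_ : ∀ i, |x i - Q.c i| < 2 * Q.r) =>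
    (volume Q.set)⁻¹ * ∫⁻ y in Q.set, g y) Q (fun i => ?_) le_rfl
  have := hx i
  have := Q.r_pos
  linarith

theorem NM_weak {n : ℕ} (hn : 0 < n) (g : RSp n → ℝ≥0∞) (l : ℝ≥0∞) (hl : l ≠ 0) (hl' : l ≠ ∞) :
    volume {x | l < NM g x} ≤ 7 ^ n * l⁻¹ * ∫⁻ x, g x := by
  by_cases hg : ∫⁻ x, g x = ∞
  · rw [hg, ENNReal.mul_top]
    · exact le_top
    · simp [hl']
  set t : Set (Cube n) := {Q : Cube n | l < (volume Q.set)⁻¹ * ∫⁻ y in Q.set, g y} with ht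
  have hvol : ∀ Q ∈ t, volume Q.set ≤ l⁻¹ * ∫⁻ y in Q.set, g y := by
    intro Q hQ
    have h1 : l < (volume Q.set)⁻¹ * ∫⁻ y in Q.set, g y := hQ
    rw [mul_comm l⁻¹, ← div_eq_mul_inv, ENNReal.le_div_iff_mul_le (Or.inl hl) (Or.inl hl'), mul_comm]
    rw [mul_comm, ← div_eq_mul_inv] at h1
    exact ENNReal.mul_le_of_le_div h1.le
  set B := l⁻¹ * ∫⁻ x, g x with hB
  have hBtop : B ≠ ∞ := ENNReal.mul_ne_top (by simp [hl]) hg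
  have hrad : ∀ Q ∈ t, Q.r ≤ 1 + B.toReal := by
    intro Q hQ
    have h1 : volume Q.set ≤ B := (hvol Q hQ).trans (by
      rw [hB]; gcongr; exact Measure.restrict_le_self)
    by_contra! hc
    have hBn : 0 ≤ B.toReal := ENNReal.toReal_nonneg
    rw [Q.volume_eq, ← ENNReal.ofReal_pow (by linarith [Q.r_pos]), ENNReal.ofReal_le_iff_le_toReal hBtop] at h1
    have h2 : 1 ≤ 2 * Q.r := by linarith
    have h3 : 2 * Q.r ≤ (2 * Q.r) ^ n := le_self_pow₀ h2 hn.ne'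
    linarith
  obtain ⟨u, hut, hdisj, hcov⟩ := Vitali.exists_disjoint_subfamily_covering_enlargement
    (fun Q : Cube n => Q.set) t (fun Q => Q.r) 2 (by norm_num) (fun Q _ => Q.r_pos.le)
    (1 + B.toReal) hrad (fun Q _ => ⟨Q.c, fun i => by simp [Q.r_pos.le]⟩)
  have hint : ∀ Q : Cube n, (interior Q.set).Nonempty := by
    intro Q
    refine ⟨Q.c, ?_⟩
    rw [mem_interior]
    refine ⟨{x : RSp n | ∀ i, |x i - Q.c i| < Q.r}, fun x hx i => (hx i).le, ?_, fun i => by simp [Q.r_pos]⟩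
    rw [Set.ofPred_forall]
    apply isOpen_iInter_of_finite
    intro i
    apply isOpen_lt _ continuous_const
    fun_prop
  have hcount : u.Countable := hdisj.countable_of_nonempty_interior (fun Q _ => hint Q)
  have hsub : {x | l < NM g x} ⊆ ⋃ Q ∈ u, (Q.scale 7 (by norm_num)).set := by
    rw [NM_superlevel]
    intro x hx
    simp only [Set.mem_iUnion] at hx ⊢
    obtain ⟨Q, hQ, hx⟩ := hx
    obtain ⟨Q', hQ', ⟨y, hy, hy'⟩, hr⟩ := hcov Q hQ
    refine ⟨Q', hQ', fun i => ?_⟩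
    have h1 := hx i
    have h2 := hy i
    have h3 := hy' i
    have h4 := Q'.r_pos
    simp only [Cube.scale]
    simp only [abs_lt, abs_le] at *
    constructor <;> linarith [h1.1, h1.2, h2.1, h2.2, h3.1, h3.2]
  calc volume {x | l < NM g x} ≤ volume (⋃ Q ∈ u, (Q.scale 7 (by norm_num)).set) := measure_mono hsub
    _ ≤ ∑' Q : u, volume ((Q : Cube n).scale 7 (by norm_num)).set := measure_biUnion_le _ hcount _
    _ = ∑' Q : u, 7 ^ n * volume (Q : Cube n).set := by
        congr 1; ext Q; rw [Cube.volume_scale]; norm_num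
    _ ≤ ∑' Q : u, 7 ^ n * (l⁻¹ * ∫⁻ y in (Q : Cube n).set, g y) := by
        gcongr with Q; exact hvol _ (hut Q.2)
    _ = 7 ^ n * (l⁻¹ * ∑' Q : u, ∫⁻ y in (Q : Cube n).set, g y) := by
        rw [ENNReal.tsum_mul_left, ENNReal.tsum_mul_left]
    _ = 7 ^ n * (l⁻¹ * ∫⁻ y in ⋃ Q ∈ u, Q.set, g y) := by
        rw [lintegral_biUnion hcount (fun Q _ => Q.measurable) hdisj]
    _ ≤ 7 ^ n * (l⁻¹ * ∫⁻ y, g y) := by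
        gcongr; exact Measure.restrict_le_self
    _ = _ := by rw [mul_assoc]

theorem NM_weak' {n : ℕ} (hn : 0 < n) (g : RSp n → ℝ≥0∞)
    (l : ℝ≥0∞) (hl : l ≠ 0) (hl' : l ≠ ∞) :
    volume {x | 2 * l < NM g x} ≤ 7 ^ n * l⁻¹ * ∫⁻ x, {y | l < g y}.indicator g x := by
  refine le_trans (measure_mono ?_) (NM_weak hn _ l hl hl')
  intro x hx
  simp only [Set.mem_ofPred_eq, NM, lt_iSup_iff] at hx ⊢
  obtain ⟨Q, hQ, h⟩ := hx
  refine ⟨Q, hQ, ?_⟩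
  have hle : ∫⁻ y in Q.set, g y ≤ (∫⁻ y in Q.set, {y | l < g y}.indicator g y) + l * volume Q.set := by
    rw [← setLIntegral_const, ← lintegral_add_right _ measurable_const]
    apply lintegral_mono
    intro y
    by_cases hy : l < g y
    · simp [Set.indicator, hy]
    · simp [Set.indicator, hy]; exact not_lt.mp hy
  by_contra! hc
  apply absurd h
  rw [not_lt]
  calc (volume Q.set)⁻¹ * ∫⁻ y in Q.set, g y ≤ (volume Q.set)⁻¹ * ((∫⁻ y in Q.set, {y | l < g y}.indicator g y) + l * volume Q.set) := by gcongr
    _ = (volume Q.set)⁻¹ * (∫⁻ y in Q.set, {y | l < g y}.indicator g y) + l * ((volume Q.set)⁻¹ * volume Q.set) := by ring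
    _ ≤ l + l * 1 := by
      gcongr
      exact ENNReal.inv_mul_le_one _
    _ = 2 * l := by ring

theorem lint_rpow (s b : ℝ) (hs : -1 < s) (hb : 0 ≤ b) :
    ∫⁻ t in Set.Ioc 0 b, ENNReal.ofReal (t ^ s) = ENNReal.ofReal (b ^ (s + 1) / (s + 1)) := by
  rw [← ofReal_integral_eq_lintegral_ofReal]
  · rw [← intervalIntegral.integral_of_le hb, integral_rpow (Or.inl hs),
      Real.zero_rpow (by linarith), sub_zero]
  · have := intervalIntegral.intervalIntegrable_rpow' (a := 0) (b := b) hs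
    exact (intervalIntegrable_iff_integrableOn_Ioc_of_le hb).1 this
  · filter_upwards [ae_restrict_mem measurableSet_Ioc] with t ht
    exact Real.rpow_nonneg ht.1.le _

theorem layer_le (p : ℝ) (hp : 1 < p) (a : ℝ≥0∞) :
    a ^ p ≤ ENNReal.ofReal p * ∫⁻ t in Set.Ioi (0:ℝ), {t : ℝ | ENNReal.ofReal (2 * t) < a}.indicator
            (fun t => ENNReal.ofReal (2 ^ p * t ^ (p - 1))) t := by
  have key : ∀ b : ℝ, 0 ≤ b → ENNReal.ofReal b < a → (ENNReal.ofReal b) ^ p ≤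
      ENNReal.ofReal p * ∫⁻ t in Set.Ioi (0:ℝ), {t : ℝ | ENNReal.ofReal (2 * t) < a}.indicator
            (fun t => ENNReal.ofReal (2 ^ p * t ^ (p - 1))) t := by
    intro b hb hba
    have h1 : ∫⁻ t in Set.Ioc 0 (b/2), ENNReal.ofReal (2 ^ p * t ^ (p - 1)) ≤
        ∫⁻ t in Set.Ioi (0:ℝ), {t : ℝ | ENNReal.ofReal (2 * t) < a}.indicator
            (fun t => ENNReal.ofReal (2 ^ p * t ^ (p - 1))) t := by
      rw [← lintegral_indicator measurableSet_Ioc, ← lintegral_indicator measurableSet_Ioi]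
      apply lintegral_mono
      intro t
      by_cases ht : t ∈ Set.Ioc 0 (b/2)
      · have h2 : t ∈ Set.Ioi (0:ℝ) := ht.1
        have h3 : t ∈ {t : ℝ | ENNReal.ofReal (2 * t) < a} := by
          refine lt_of_le_of_lt (ENNReal.ofReal_le_ofReal ?_) hba
          linarith [ht.2]
        rw [Set.indicator_of_mem ht, Set.indicator_of_mem h2, Set.indicator_of_mem h3]
      · rw [Set.indicator_of_notMem ht]; exact zero_le
    refine le_trans ?_ (mul_le_mul_right h1 _)
    have h2 : ∫⁻ t in Set.Ioc 0 (b/2), ENNReal.ofReal (2 ^ p * t ^ (p - 1)) =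
        ENNReal.ofReal (2 ^ p) * ENNReal.ofReal ((b/2) ^ p / p) := by
      have := lint_rpow (p - 1) (b / 2) (by linarith) (by linarith)
      rw [sub_add_cancel] at this
      rw [← this, ← lintegral_const_mul]
      · congr 1; ext t; rw [ENNReal.ofReal_mul (by positivity)]
      · fun_prop
    rw [h2, ENNReal.ofReal_rpow_of_nonneg hb (by linarith), ← ENNReal.ofReal_mul (by positivity),
      ← ENNReal.ofReal_mul (by linarith)]
    apply ENNReal.ofReal_le_ofReal
    rw [Real.div_rpow hb (by norm_num)]
    have : (2:ℝ) ^ p ≠ 0 := by positivity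
    field_simp
    exact le_rfl
  rcases eq_or_ne a 0 with h0 | h0
  · rw [h0, ENNReal.zero_rpow_of_pos (by linarith)]; exact zero_le
  set R := ENNReal.ofReal p * ∫⁻ t in Set.Ioi (0:ℝ), {t : ℝ | ENNReal.ofReal (2 * t) < a}.indicator
            (fun t => ENNReal.ofReal (2 ^ p * t ^ (p - 1))) t with hR
  rw [← ENNReal.le_rpow_inv_iff (by linarith)]
  apply le_of_forall_lt
  intro c hc
  obtain ⟨d, hcd, hda⟩ := exists_between hc
  refine lt_of_lt_of_le hcd ?_
  rw [ENNReal.le_rpow_inv_iff (by linarith)]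
  have hd : d ≠ ∞ := (lt_of_lt_of_le hda le_top).ne
  have := key d.toReal ENNReal.toReal_nonneg (by rwa [ENNReal.ofReal_toReal hd])
  rwa [ENNReal.ofReal_toReal hd] at this

theorem layer_ge (p : ℝ) (hp : 1 < p) (a : ℝ≥0∞) :
    ∫⁻ t in Set.Ioi (0:ℝ), {t : ℝ | ENNReal.ofReal t < a}.indicator
            (fun t => ENNReal.ofReal (t ^ (p - 2)) * a) t ≤ ENNReal.ofReal (1 / (p - 1)) * a ^ p := by
  have hp1 : 0 < p - 1 := by linarith
  rcases eq_or_ne a ∞ with h | h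
  · rw [h, ENNReal.top_rpow_of_pos (by linarith), ENNReal.mul_top]
    · exact le_top
    · simp; exact hp
  have h1 : ∫⁻ t in Set.Ioi (0:ℝ), {t : ℝ | ENNReal.ofReal t < a}.indicator
            (fun t => ENNReal.ofReal (t ^ (p - 2)) * a) t ≤
      ∫⁻ t in Set.Ioc 0 a.toReal, ENNReal.ofReal (t ^ (p - 2)) * a := by
    rw [← lintegral_indicator measurableSet_Ioc, ← lintegral_indicator measurableSet_Ioi]
    apply lintegral_mono
    intro t
    by_cases ht : t ∈ Set.Ioc 0 a.toReal
    · rw [Set.indicator_of_mem ht, Set.indicator_of_mem (show t ∈ Set.Ioi (0:ℝ) from ht.1)]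
      exact Set.indicator_le_self _ _ _
    · by_cases h2 : t ∈ Set.Ioi (0:ℝ)
      · rw [Set.indicator_of_mem h2, Set.indicator_of_notMem (s := {t : ℝ | ENNReal.ofReal t < a})]
        · exact zero_le
        · intro h3
          apply ht
          refine ⟨h2, ?_⟩
          rw [← ENNReal.ofReal_le_iff_le_toReal h]
          exact le_of_lt h3
      · rw [Set.indicator_of_notMem h2]; exact zero_le
  refine h1.trans ?_
  rw [lintegral_mul_const _ (by fun_prop), lint_rpow _ _ (by linarith) ENNReal.toReal_nonneg]
  have e : p - 2 + 1 = p - 1 := by ring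
  rw [e, div_eq_mul_one_div, ENNReal.ofReal_mul (by positivity), mul_comm (ENNReal.ofReal _) (ENNReal.ofReal _),
    mul_assoc, ← ENNReal.ofReal_rpow_of_nonneg ENNReal.toReal_nonneg hp1.le, ENNReal.ofReal_toReal h]
  gcongr
  nth_rewrite 2 [← ENNReal.rpow_one a]
  rw [← ENNReal.rpow_add_of_nonneg _ _ hp1.le zero_le_one]
  simp

theorem NM_strong {n : ℕ} (hn : 0 < n) (p : ℝ) (hp : 1 < p) :
    ∃ C : ℝ≥0∞, C ≠ ∞ ∧ ∀ g : RSp n → ℝ≥0∞, Measurable g →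
      ∫⁻ x, NM g x ^ p ≤ C * ∫⁻ x, g x ^ p := by
  refine ⟨ENNReal.ofReal p * (ENNReal.ofReal (2 ^ p) * 7 ^ n * ENNReal.ofReal (1 / (p - 1))),
    by finiteness, fun g hg => ?_⟩
  have hm : Measurable fun z : RSp n × ℝ => {t : ℝ | ENNReal.ofReal (2 * t) < NM g z.1}.indicator
            (fun t => ENNReal.ofReal (2 ^ p * t ^ (p - 1))) z.2 := by
    have : (fun z : RSp n × ℝ => {t : ℝ | ENNReal.ofReal (2 * t) < NM g z.1}.indicator
            (fun t => ENNReal.ofReal (2 ^ p * t ^ (p - 1))) z.2) =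
      {z : RSp n × ℝ | ENNReal.ofReal (2 * z.2) < NM g z.1}.indicator
        (fun z => ENNReal.ofReal (2 ^ p * z.2 ^ (p - 1))) := by
      ext z; simp [Set.indicator]
    rw [this]
    apply Measurable.indicator (by fun_prop)
    exact measurableSet_lt (by fun_prop) ((NM_measurable g).comp measurable_fst)
  have hm2 : Measurable fun z : RSp n × ℝ => {t : ℝ | ENNReal.ofReal t < g z.1}.indicator
            (fun t => ENNReal.ofReal (t ^ (p - 2)) * g z.1) z.2 := by
    have : (fun z : RSp n × ℝ => {t : ℝ | ENNReal.ofReal t < g z.1}.indicator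
            (fun t => ENNReal.ofReal (t ^ (p - 2)) * g z.1) z.2) =
      {z : RSp n × ℝ | ENNReal.ofReal z.2 < g z.1}.indicator
        (fun z => ENNReal.ofReal (z.2 ^ (p - 2)) * g z.1) := by
      ext z; simp [Set.indicator]
    rw [this]
    apply Measurable.indicator (by fun_prop)
    exact measurableSet_lt (by fun_prop) (by fun_prop)
  calc ∫⁻ x, NM g x ^ p
      ≤ ∫⁻ x, ENNReal.ofReal p * ∫⁻ t in Set.Ioi (0:ℝ), {t : ℝ | ENNReal.ofReal (2 * t) < NM g x}.indicator
            (fun t => ENNReal.ofReal (2 ^ p * t ^ (p - 1))) t := lintegral_mono fun x => layer_le p hp _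
    _ = ENNReal.ofReal p * ∫⁻ x, ∫⁻ t in Set.Ioi (0:ℝ), {t : ℝ | ENNReal.ofReal (2 * t) < NM g x}.indicator
            (fun t => ENNReal.ofReal (2 ^ p * t ^ (p - 1))) t := lintegral_const_mul' _ _ (by finiteness)
    _ = ENNReal.ofReal p * ∫⁻ t in Set.Ioi (0:ℝ), ∫⁻ x, {t : ℝ | ENNReal.ofReal (2 * t) < NM g x}.indicator
            (fun t => ENNReal.ofReal (2 ^ p * t ^ (p - 1))) t := by
        rw [lintegral_lintegral_swap]
        exact hm.aemeasurable
    _ ≤ ENNReal.ofReal p * ∫⁻ t in Set.Ioi (0:ℝ), (ENNReal.ofReal (2 ^ p) * 7 ^ n) *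
          ∫⁻ x, {t : ℝ | ENNReal.ofReal t < g x}.indicator
            (fun t => ENNReal.ofReal (t ^ (p - 2)) * g x) t := by
        gcongr 1
        apply setLIntegral_mono' measurableSet_Ioi
        intro t ht
        have ht0 : 0 < t := ht
        have e1 : ∫⁻ x, {t : ℝ | ENNReal.ofReal (2 * t) < NM g x}.indicator
            (fun t => ENNReal.ofReal (2 ^ p * t ^ (p - 1))) t =
            ENNReal.ofReal (2 ^ p * t ^ (p - 1)) * volume {x | 2 * ENNReal.ofReal t < NM g x} := by
          rw [← lintegral_indicator_const]
          · apply lintegral_congr; intro x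
            simp [Set.indicator, ENNReal.ofReal_mul]
          · exact measurableSet_lt measurable_const (NM_measurable g)
        have e2 : ∫⁻ x, {t : ℝ | ENNReal.ofReal t < g x}.indicator
            (fun t => ENNReal.ofReal (t ^ (p - 2)) * g x) t =
            ENNReal.ofReal (t ^ (p - 2)) * ∫⁻ x, {y | ENNReal.ofReal t < g y}.indicator g x := by
          rw [← lintegral_const_mul' _ _ (by finiteness)]
          apply lintegral_congr; intro x
          simp only [Set.indicator, Set.mem_ofPred_eq]
          split_ifs <;> simp
        rw [e1, e2]
        have := NM_weak' hn g (ENNReal.ofReal t) (by simpa using ht0) (by finiteness)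
        calc ENNReal.ofReal (2 ^ p * t ^ (p - 1)) * volume {x | 2 * ENNReal.ofReal t < NM g x}
            ≤ ENNReal.ofReal (2 ^ p * t ^ (p - 1)) * (7 ^ n * (ENNReal.ofReal t)⁻¹ * ∫⁻ x, {y | ENNReal.ofReal t < g y}.indicator g x) := by gcongr
          _ = (ENNReal.ofReal (2 ^ p * t ^ (p - 1)) * (ENNReal.ofReal t)⁻¹) * 7 ^ n * ∫⁻ x, {y | ENNReal.ofReal t < g y}.indicator g x := by ring
          _ = (ENNReal.ofReal (2 ^ p) * ENNReal.ofReal (t ^ (p - 2))) * 7 ^ n * ∫⁻ x, {y | ENNReal.ofReal t < g y}.indicator g x := by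
            congr 2
            rw [← ENNReal.ofReal_inv_of_pos ht0, ← ENNReal.ofReal_mul (by positivity), ← ENNReal.ofReal_mul (by positivity)]
            congr 1
            rw [show p - 1 = (p - 2) + 1 by ring, Real.rpow_add ht0, Real.rpow_one]
            field_simp
          _ = _ := by ring
    _ = ENNReal.ofReal p * ((ENNReal.ofReal (2 ^ p) * 7 ^ n) * ∫⁻ t in Set.Ioi (0:ℝ),
          ∫⁻ x, {t : ℝ | ENNReal.ofReal t < g x}.indicator
            (fun t => ENNReal.ofReal (t ^ (p - 2)) * g x) t) := by
        rw [lintegral_const_mul' _ _ (by finiteness)]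
    _ = ENNReal.ofReal p * ((ENNReal.ofReal (2 ^ p) * 7 ^ n) * ∫⁻ x, ∫⁻ t in Set.Ioi (0:ℝ),
          {t : ℝ | ENNReal.ofReal t < g x}.indicator
            (fun t => ENNReal.ofReal (t ^ (p - 2)) * g x) t) := by
        rw [lintegral_lintegral_swap]
        exact (hm2.comp measurable_swap).aemeasurable
    _ ≤ ENNReal.ofReal p * ((ENNReal.ofReal (2 ^ p) * 7 ^ n) * ∫⁻ x, ENNReal.ofReal (1 / (p - 1)) * g x ^ p) := by
        gcongr; exact layer_ge p hp _
    _ = _ := by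
        rw [lintegral_const_mul' _ _ (by finiteness)]; ring

end HL


noncomputable section INV

/-- finite inverse -/
def iv {n : ℕ} (φ : RSp n → ℝ≥0 → ℝ≥0∞) (x : RSp n) (t : ℝ≥0) : ℝ≥0 := (phiInv φ x t).toNNReal

theorem coe_iv {n : ℕ} {φ : RSp n → ℝ≥0 → ℝ≥0∞} (hφ : IsWeakPhi Set.univ φ) (x : RSp n) (t : ℝ≥0) :
    (iv φ x t : ℝ≥0∞) = phiInv φ x t := by
  apply ENNReal.coe_toNNReal
  have h := (hφ.lim_top x (Set.mem_univ x)).eventually (lt_mem_nhds (a := (t : ℝ≥0∞)) (by simp))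
  obtain ⟨s, hs⟩ := h.exists
  refine ne_top_of_le_ne_top (b := (s : ℝ≥0∞)) (by simp) ?_
  apply sInf_le
  exact ⟨s, hs.le, rfl⟩

theorem iv_le {n : ℕ} {φ : RSp n → ℝ≥0 → ℝ≥0∞} (hφ : IsWeakPhi Set.univ φ) (x : RSp n) (t s : ℝ≥0)
    (h : (t : ℝ≥0∞) ≤ φ x s) : iv φ x t ≤ s := by
  rw [← ENNReal.coe_le_coe, coe_iv hφ]
  exact sInf_le ⟨s, h, rfl⟩

theorem le_of_iv_lt {n : ℕ} {φ : RSp n → ℝ≥0 → ℝ≥0∞} (hφ : IsWeakPhi Set.univ φ) (x : RSp n) (t s : ℝ≥0)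
    (h : iv φ x t < s) : (t : ℝ≥0∞) ≤ φ x s := by
  rw [← ENNReal.coe_lt_coe, coe_iv hφ, phiInv, sInf_lt_iff] at h
  obtain ⟨_, ⟨u, hu, rfl⟩, hus⟩ := h
  have : u ≤ s := (ENNReal.coe_lt_coe.1 hus).le
  exact le_trans hu (hφ.mono x (Set.mem_univ x) this)

theorem le_iv {n : ℕ} {φ : RSp n → ℝ≥0 → ℝ≥0∞} (hφ : IsWeakPhi Set.univ φ) (x : RSp n) (t s : ℝ≥0)
    (h : φ x s < t) : s ≤ iv φ x t := by
  by_contra! hc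
  exact absurd (le_of_iv_lt hφ x t s hc) (not_le.2 h)

theorem lt_of_lt_iv {n : ℕ} {φ : RSp n → ℝ≥0 → ℝ≥0∞} (hφ : IsWeakPhi Set.univ φ) (x : RSp n) (t s : ℝ≥0)
    (h : s < iv φ x t) : φ x s < t := by
  by_contra! hc
  exact absurd (iv_le hφ x t s hc) (not_le.2 h)

theorem iv_mono {n : ℕ} {φ : RSp n → ℝ≥0 → ℝ≥0∞} (hφ : IsWeakPhi Set.univ φ) (x : RSp n) {t t' : ℝ≥0}
    (h : t ≤ t') : iv φ x t ≤ iv φ x t' := by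
  apply le_of_forall_gt_imp_ge_of_dense
  intro s hs
  apply iv_le hφ
  exact le_trans (by exact_mod_cast h) (le_of_iv_lt hφ x t' s hs)

theorem iv_scale {n : ℕ} {φ : RSp n → ℝ≥0 → ℝ≥0∞} (hφ : IsWeakPhi Set.univ φ) (p : ℝ) (hp : 1 < p)
    (L : ℝ≥0) (hL : 1 ≤ L)
    (hinc : ∀ x ∈ (Set.univ : Set (RSp n)), ∀ s t : ℝ≥0, 0 < s → s < t →
    φ x s / (s : ℝ≥0∞) ^ p ≤ (L : ℝ≥0∞) * (φ x t / (t : ℝ≥0∞) ^ p))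
    (x : RSp n) (l t : ℝ≥0) (hl : 1 ≤ l) :
    iv φ x (l * t) ≤ (L * l) ^ (1 / p) * iv φ x t := by
  have hp0 : 0 < p := by linarith
  have hLl : 1 ≤ L * l := by
    calc (1 : ℝ≥0) = 1 * 1 := by simp
      _ ≤ L * l := mul_le_mul' hL hl
  have hc : 1 ≤ (L * l) ^ (1 / p) := NNReal.one_le_rpow hLl (by positivity)
  set c := (L * l) ^ (1 / p) with hcdef
  have hcp : c ^ p = L * l := by
    rw [hcdef, ← NNReal.rpow_mul]; simp [hp0.ne']
  have key : ∀ s, iv φ x t < s → iv φ x (l * t) ≤ c * s := by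
    intro s hs
    have h1 := le_of_iv_lt hφ x t s hs
    apply iv_le hφ
    have hs0 : 0 < s := lt_of_le_of_lt zero_le hs
    rcases eq_or_lt_of_le hc with h | h
    · rw [← h, NNReal.one_rpow] at hcp
      have : l = 1 := by
        apply le_antisymm _ hl
        calc l = 1 * l := by simp
          _ ≤ L * l := by gcongr
          _ = 1 := hcp.symm
      rw [← h, this]; simpa using h1
    · have hcs : s < c * s := lt_mul_of_one_lt_left hs0 h
      have h2 := hinc x (Set.mem_univ x) s (c * s) hs0 hcs
      have hsp : (s : ℝ≥0∞) ^ p ≠ 0 := by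
        simp [ENNReal.rpow_eq_zero_iff, hs0.ne', hp0.le]
      have hsp' : (s : ℝ≥0∞) ^ p ≠ ∞ := by
        exact ENNReal.rpow_ne_top_of_nonneg hp0.le (by simp)
      have e : ((c * s : ℝ≥0) : ℝ≥0∞) ^ p = (L * l : ℝ≥0) * (s : ℝ≥0∞) ^ p := by
        rw [ENNReal.coe_mul, ENNReal.mul_rpow_of_nonneg _ _ hp0.le, ← ENNReal.coe_rpow_of_nonneg _ hp0.le, hcp]
      rw [e, ENNReal.div_le_iff hsp hsp'] at h2
      have hL0 : (L : ℝ≥0∞) ≠ 0 := by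
        have : 0 < L := lt_of_lt_of_le one_pos hL
        simpa using this.ne'
      have hl0 : (l : ℝ≥0∞) ≠ 0 := by
        have : 0 < l := lt_of_lt_of_le one_pos hl
        simpa using this.ne'
      have h3 : φ x s ≤ φ x (c * s) * (l : ℝ≥0∞)⁻¹ := by
        refine h2.trans (le_of_eq ?_)
        rw [div_eq_mul_inv, ENNReal.mul_inv (Or.inr hsp') (Or.inr hsp), ENNReal.coe_mul,
          ENNReal.mul_inv (Or.inl hL0) (Or.inl (by simp))]
        calc (L : ℝ≥0∞) * (φ x (c * s) * ((L : ℝ≥0∞)⁻¹ * (l : ℝ≥0∞)⁻¹ * ((s : ℝ≥0∞) ^ p)⁻¹)) * (s : ℝ≥0∞) ^ p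
            = ((L : ℝ≥0∞) * (L : ℝ≥0∞)⁻¹) * (φ x (c * s) * (l : ℝ≥0∞)⁻¹) * (((s : ℝ≥0∞) ^ p) * ((s : ℝ≥0∞) ^ p)⁻¹) := by ring
          _ = _ := by
            rw [ENNReal.mul_inv_cancel hL0 (by simp), ENNReal.mul_inv_cancel hsp hsp']; simp
      rw [← div_eq_mul_inv] at h3
      have h4 := ENNReal.mul_le_of_le_div (h1.trans h3)
      rw [ENNReal.coe_mul, mul_comm]; exact h4
  apply le_of_forall_gt_imp_ge_of_dense
  intro s hs
  have hc0 : 0 < c := lt_of_lt_of_le one_pos hc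
  have h5 : iv φ x t < s / c := by
    rw [lt_div_iff₀ hc0, mul_comm]; exact hs
  have := key (s / c) h5
  rwa [mul_div_cancel₀ _ hc0.ne'] at this

theorem A2meas {n : ℕ} {φ : RSp n → ℝ≥0 → ℝ≥0∞} (hφ : IsWeakPhi Set.univ φ) (h2 : A2 φ) :
    ∃ h : RSp n → ℝ≥0, Measurable h ∧ (∀ x, 0 < h x) ∧ (∃ M : ℝ≥0, ∀ x, h x ≤ M) ∧
      (∫⁻ x, (h x : ℝ≥0∞)) ≠ ∞ ∧ ∃ (φi : ℝ≥0 → ℝ≥0∞) (β s : ℝ≥0), 0 < β ∧ 0 < s ∧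
      ∀ᵐ x ∂(volume : Measure (RSp n)), ∀ t : ℝ≥0,
      (φi t ≤ (s : ℝ≥0∞) → φ x (β * t) ≤ φi t + h x) ∧
      (φ x t ≤ (s : ℝ≥0∞) → φi (β * t) ≤ φ x t + h x) := by
  obtain ⟨φi, hφi, h, hint, ⟨M, hM⟩, β, hβ, -, s, hs, hA⟩ := h2
  have mφ : ∀ t : ℝ≥0, AEMeasurable (fun x => φ x t) volume := by
    intro t
    have := hφ.meas (fun _ => t) measurable_const
    rwa [Measure.restrict_univ] at this
  have monoi : Monotone φi := hφi.mono 0 (Set.mem_univ _)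
  have zeroi : φi 0 = 0 := hφi.zero 0 (Set.mem_univ _)
  let H : RSp n → ℝ≥0∞ := fun x =>
    (⨆ k : ℤ, if φi (2 ^ k) ≤ (s : ℝ≥0∞) then φ x (β * 2 ^ k) - φi (2 ^ k) else 0) ⊔
    (⨆ k : ℤ, (fun y : ℝ≥0∞ => if y ≤ (s : ℝ≥0∞) then φi (β * 2 ^ k) - y else 0) (φ x (2 ^ k)))
  have hHm : AEMeasurable H volume := by
    apply AEMeasurable.sup
    · apply AEMeasurable.iSup
      intro k
      split_ifs
      · exact (mφ _).sub aemeasurable_const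
      · exact aemeasurable_const
    · apply AEMeasurable.iSup
      intro k
      have hm : Measurable (fun y : ℝ≥0∞ => if y ≤ (s : ℝ≥0∞) then φi (β * 2 ^ k) - y else 0) :=
        Measurable.ite measurableSet_Iic (by fun_prop) (by fun_prop)
      exact hm.comp_aemeasurable (mφ _)
  have hHle : H ≤ᵐ[volume] h := by
    filter_upwards [hA] with x hx
    apply sup_le
    · apply iSup_le; intro k
      split_ifs with hk
      · rw [tsub_le_iff_left]; exact (hx _).1 hk
      · exact zero_le
    · apply iSup_le; intro k
      dsimp only
      split_ifs with hk
      · rw [tsub_le_iff_left]; exact (hx _).2 hk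
      · exact zero_le
  have hHint : ∫⁻ x, H x ≠ ∞ := (lt_of_le_of_lt (lintegral_mono_ae hHle) hint).ne
  obtain ⟨g, gpos, gm, gint⟩ := exists_pos_lintegral_lt_of_sigmaFinite (volume : Measure (RSp n)) (ε := 1) one_ne_zero
  let h' : RSp n → ℝ≥0 := fun x => min (hHm.mk H x).toNNReal M + min (g x) 1
  have hae : ∀ᵐ x ∂(volume : Measure (RSp n)), H x ≤ h' x := by
    filter_upwards [hHle, hM, hHm.ae_eq_mk] with x h1 h2 h3
    have h4 : H x ≤ M := h1.trans h2
    have h5 : H x ≠ ∞ := ne_top_of_le_ne_top (by simp) h4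
    calc H x = ((min (hHm.mk H x).toNNReal M : ℝ≥0) : ℝ≥0∞) := by
          rw [← h3, min_eq_left, ENNReal.coe_toNNReal h5]
          rw [← ENNReal.coe_le_coe, ENNReal.coe_toNNReal h5]; exact h4
      _ ≤ h' x := by
          rw [ENNReal.coe_le_coe]; exact le_self_add
  refine ⟨h', ?_, ?_, ⟨M + 1, ?_⟩, ?_, φi, β / 2, s, by positivity, hs, ?_⟩
  · exact ((hHm.measurable_mk.ennreal_toNNReal).min measurable_const).add (gm.min measurable_const)
  · intro x
    have : 0 < min (g x) 1 := lt_min (gpos x) one_pos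
    exact lt_of_lt_of_le this le_add_self
  · intro x
    exact add_le_add (min_le_right _ _) (min_le_right _ _)
  · have : ∫⁻ x, (h' x : ℝ≥0∞) ≤ (∫⁻ x, H x) + ∫⁻ x, (g x : ℝ≥0∞) := by
      rw [← lintegral_add_right _ (by fun_prop)]
      apply lintegral_mono_ae
      filter_upwards [hHm.ae_eq_mk] with x h3
      simp only [h', ENNReal.coe_add]
      apply add_le_add
      · refine le_trans (ENNReal.coe_le_coe.2 (min_le_left _ _)) ?_
        rw [← h3]; exact ENNReal.coe_toNNReal_le_self
      · exact ENNReal.coe_le_coe.2 (min_le_left _ _)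
    refine ne_top_of_le_ne_top ?_ this
    exact ENNReal.add_ne_top.2 ⟨hHint, (gint.trans ENNReal.one_lt_top).ne⟩
  · filter_upwards [hae] with x hx t
    have hmono := hφ.mono x (Set.mem_univ x)
    rcases eq_or_ne t 0 with rfl | ht
    · simp [hφ.zero x (Set.mem_univ x), zeroi]
    obtain ⟨k, hk1, hk2⟩ := exists_mem_Ico_zpow (pos_iff_ne_zero.2 ht) (one_lt_two (α := ℝ≥0))
    have hk3 : β / 2 * t ≤ β * 2 ^ k := by
      rw [zpow_add₀ two_ne_zero, zpow_one] at hk2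
      calc β / 2 * t ≤ β / 2 * (2 ^ k * 2) := by gcongr
        _ = β * 2 ^ k := by field_simp
    have a1 : (if φi (2 ^ k) ≤ (s : ℝ≥0∞) then φ x (β * 2 ^ k) - φi (2 ^ k) else 0) ≤ H x :=
      le_trans (le_iSup (fun k : ℤ => if φi (2 ^ k) ≤ (s : ℝ≥0∞) then φ x (β * 2 ^ k) - φi (2 ^ k) else 0) k) le_sup_left
    have a2 : (if φ x (2 ^ k) ≤ (s : ℝ≥0∞) then φi (β * 2 ^ k) - φ x (2 ^ k) else 0) ≤ H x :=
      le_trans (le_iSup (fun k : ℤ => if φ x (2 ^ k) ≤ (s : ℝ≥0∞) then φi (β * 2 ^ k) - φ x (2 ^ k) else 0) k) le_sup_right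
    constructor
    · intro h1
      rw [if_pos ((monoi hk1).trans h1), tsub_le_iff_left] at a1
      calc φ x (β / 2 * t) ≤ φ x (β * 2 ^ k) := hmono hk3
        _ ≤ φi (2 ^ k) + H x := a1
        _ ≤ φi t + h' x := add_le_add (monoi hk1) hx
    · intro h1
      rw [if_pos ((hmono hk1).trans h1), tsub_le_iff_left] at a2
      calc φi (β / 2 * t) ≤ φi (β * 2 ^ k) := monoi hk3
        _ ≤ φ x (2 ^ k) + H x := a2
        _ ≤ φ x t + h' x := add_le_add (hmono hk1) hx

end INV


noncomputable section CMP

theorem A1good {n : ℕ} {φ : RSp n → ℝ≥0 → ℝ≥0∞} (hφ : IsWeakPhi Set.univ φ) (h1 : A1 φ) :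
    ∃ β : ℝ≥0, 0 < β ∧ ∃ S : Cube n → Set (RSp n), ∀ Q : Cube n, volume Q.set ≤ 1 →
      (∀ᵐ x ∂(volume : Measure (RSp n)), x ∈ Q.set → x ∈ S Q) ∧
      ∀ x ∈ S Q, ∀ z ∈ S Q, ∀ k : ℕ, ((2 ^ k : ℝ≥0) : ℝ≥0∞) ≤ (volume Q.set)⁻¹ →
        β * iv φ z (2 ^ k) ≤ iv φ x (2 ^ k) := by
  obtain ⟨β, hβ, -, hA⟩ := h1
  refine ⟨β, hβ, fun Q => {x | (∀ᵐ y ∂(volume.restrict Q.set),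
      ∀ t : ℝ≥0∞, 1 ≤ t → t ≤ (volume Q.set)⁻¹ →
        (β : ℝ≥0∞) * phiInv φ x t ≤ phiInv φ y t) ∧
      ∀ k : ℕ, essInf (fun y => phiInv φ y ((2 ^ k : ℝ≥0) : ℝ≥0∞)) (volume.restrict Q.set) ≤
        phiInv φ x ((2 ^ k : ℝ≥0) : ℝ≥0∞)}, fun Q hQ => ⟨?_, ?_⟩⟩
  · rw [← ae_restrict_iff' Q.measurable]
    filter_upwards [hA Q hQ, ae_all_iff.2 fun k : ℕ =>
      ae_essInf_le (μ := volume.restrict Q.set) (f := fun y => phiInv φ y ((2 ^ k : ℝ≥0) : ℝ≥0∞))] with x hx hx'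
    exact ⟨hx, hx'⟩
  · rintro x ⟨-, hx⟩ z ⟨hz, -⟩ k hk
    rw [← ENNReal.coe_le_coe, ENNReal.coe_mul, coe_iv hφ, coe_iv hφ]
    refine le_trans ?_ (hx k)
    refine le_essInf_of_ae_le _ ?_
    filter_upwards [hz] with y hy
    apply hy _ _ hk
    exact_mod_cast one_le_pow₀ (one_le_two (α := ℝ≥0))

theorem bddComp {n : ℕ} {φ : RSp n → ℝ≥0 → ℝ≥0∞} (hφ : IsWeakPhi Set.univ φ) (p : ℝ) (hp : 1 < p)
    (L : ℝ≥0) (hL : 1 ≤ L)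
    (hinc : ∀ x ∈ (Set.univ : Set (RSp n)), ∀ s t : ℝ≥0, 0 < s → s < t →
    φ x s / (s : ℝ≥0∞) ^ p ≤ (L : ℝ≥0∞) * (φ x t / (t : ℝ≥0∞) ^ p))
    (h0 : A0 Set.univ φ) (h : RSp n → ℝ≥0) (φi : ℝ≥0 → ℝ≥0∞) (β s : ℝ≥0) (hβ : 0 < β) (hs : 0 < s)
    (hA : ∀ᵐ x ∂(volume : Measure (RSp n)), ∀ t : ℝ≥0,
      (φi t ≤ (s : ℝ≥0∞) → φ x (β * t) ≤ φi t + h x) ∧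
      (φ x t ≤ (s : ℝ≥0∞) → φi (β * t) ≤ φ x t + h x)) (N : ℝ≥0) :
    ∃ C : ℝ≥0, ∃ P : Set (RSp n), (∀ᵐ x ∂(volume : Measure (RSp n)), x ∈ P) ∧
      ∀ x ∈ P, ∀ z ∈ P, ∀ V : ℝ≥0, V ≠ 0 → h x ≤ V → h z ≤ V → V ≤ N → iv φ z V ≤ C * iv φ x V := by
  obtain ⟨b, hb, -, hb'⟩ := h0
  rw [Measure.restrict_univ] at hb'
  set σ : ℝ≥0 := min (s / 4) 1 with hσ
  have hσ0 : 0 < σ := lt_min (by positivity) one_pos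
  set N' := max N 1 with hN'
  refine ⟨(β * β)⁻¹ * (L * 4) ^ (1 / p) + (L * N') ^ (1 / p) * b⁻¹ * b⁻¹ * (L * σ⁻¹) ^ (1 / p),
    {x | (∀ t : ℝ≥0,
      (φi t ≤ (s : ℝ≥0∞) → φ x (β * t) ≤ φi t + h x) ∧
      (φ x t ≤ (s : ℝ≥0∞) → φi (β * t) ≤ φ x t + h x)) ∧ b ≤ iv φ x 1 ∧ iv φ x 1 ≤ b⁻¹}, ?_, ?_⟩
  · filter_upwards [hA, hb'] with x hx hx'
    refine ⟨hx, ?_, ?_⟩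
    · rw [← ENNReal.coe_le_coe, coe_iv hφ]; simpa using hx'.1
    · rw [← ENNReal.coe_le_coe, coe_iv hφ, ENNReal.coe_inv hb.ne']; simpa using hx'.2
  · rintro x ⟨hx, hx1, hx2⟩ z ⟨hz, hz1, hz2⟩ V hV0 hxV hzV hVN
    rw [add_mul]
    by_cases hV : V ≤ s / 4
    · refine le_trans ?_ le_self_add
      have h4V : 4 * V ≤ s := by
        calc 4 * V ≤ 4 * (s / 4) := by gcongr
          _ = s := by field_simp
      apply le_of_forall_lt_imp_le_of_dense
      intro τ hτ
      have e1 := lt_of_lt_iv hφ z V τ hτ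
      have hVs : (V : ℝ≥0∞) ≤ s := by
        rw [ENNReal.coe_le_coe]
        refine le_trans ?_ h4V
        calc V = 1 * V := by simp
          _ ≤ 4 * V := by gcongr; norm_num
      have e2 : φi (β * τ) ≤ ((2 * V : ℝ≥0) : ℝ≥0∞) := by
        calc φi (β * τ) ≤ φ z τ + h z := (hz τ).2 (e1.le.trans hVs)
          _ ≤ V + V := by gcongr
          _ = _ := by push_cast; ring
      have e3 : φ x (β * (β * τ)) ≤ ((3 * V : ℝ≥0) : ℝ≥0∞) := by
        calc φ x (β * (β * τ)) ≤ φi (β * τ) + h x := by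
              apply (hx _).1
              refine e2.trans (ENNReal.coe_le_coe.2 (le_trans ?_ h4V))
              gcongr; norm_num
          _ ≤ ((2 * V : ℝ≥0) : ℝ≥0∞) + V := by gcongr
          _ = _ := by push_cast; ring
      have e4 : β * (β * τ) ≤ iv φ x (4 * V) := by
        apply le_iv hφ
        refine lt_of_le_of_lt e3 (ENNReal.coe_lt_coe.2 ?_)
        have : 0 < V := pos_iff_ne_zero.2 hV0
        gcongr; norm_num
      have e5 := e4.trans (iv_scale hφ p hp L hL hinc x 4 V (by norm_num))
      calc τ = (β * β)⁻¹ * (β * (β * τ)) := by field_simp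
        _ ≤ (β * β)⁻¹ * ((L * 4) ^ (1 / p) * iv φ x V) := by gcongr
        _ = _ := by ring
    · push Not at hV
      refine le_trans ?_ le_add_self
      have hσV : σ ≤ V := (min_le_left _ _).trans hV.le
      have e1 : iv φ z V ≤ (L * N') ^ (1 / p) * b⁻¹ := by
        calc iv φ z V ≤ iv φ z (N' * 1) := iv_mono hφ z (by rw [mul_one]; exact hVN.trans (le_max_left _ _))
          _ ≤ (L * N') ^ (1 / p) * iv φ z 1 := iv_scale hφ p hp L hL hinc z N' 1 (le_max_right _ _)
          _ ≤ _ := by gcongr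
      have e2 : b ≤ (L * σ⁻¹) ^ (1 / p) * iv φ x V := by
        calc b ≤ iv φ x 1 := hx1
          _ = iv φ x (σ⁻¹ * σ) := by rw [inv_mul_cancel₀ hσ0.ne']
          _ ≤ (L * σ⁻¹) ^ (1 / p) * iv φ x σ := iv_scale hφ p hp L hL hinc x _ _ (by
              rw [one_le_inv₀ hσ0]; exact min_le_right _ _)
          _ ≤ _ := by gcongr; exact iv_mono hφ x hσV
      calc iv φ z V ≤ (L * N') ^ (1 / p) * b⁻¹ * (b⁻¹ * b) := by
            rw [inv_mul_cancel₀ hb.ne', mul_one]; exact e1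
        _ ≤ (L * N') ^ (1 / p) * b⁻¹ * (b⁻¹ * ((L * σ⁻¹) ^ (1 / p) * iv φ x V)) := by gcongr
        _ = _ := by ring

/-- countable family of cubes -/
def ccube (n : ℕ) (i : ℕ × {ρ : ℚ // 0 < ρ}) : Cube n :=
  ⟨TopologicalSpace.denseSeq (RSp n) i.1, (i.2.1 : ℝ), by exact_mod_cast i.2.2⟩

theorem exists_ccube {n : ℕ} (Q : Cube n) : ∃ i, Q.set ⊆ (ccube n i).set ∧
    volume (ccube n i).set ≤ 2 ^ n * volume Q.set := by
  have hr := Q.r_pos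
  obtain ⟨i, hi⟩ := (TopologicalSpace.denseRange_denseSeq (RSp n)).exists_dist_lt Q.c (half_pos hr)
  obtain ⟨ρ, h1, h2⟩ := exists_rat_btwn (show 3 / 2 * Q.r < 2 * Q.r by linarith)
  have hρ : 0 < ρ := by
    have : (0:ℝ) < ρ := by linarith
    exact_mod_cast this
  refine ⟨(i, ⟨ρ, hρ⟩), ?_, ?_⟩
  · intro y hy j
    have h3 := hy j
    have h4 : |Q.c j - TopologicalSpace.denseSeq (RSp n) i j| ≤ dist Q.c (TopologicalSpace.denseSeq (RSp n) i) := by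
      rw [dist_eq_norm]
      exact PiLp.norm_apply_le (Q.c - TopologicalSpace.denseSeq (RSp n) i) j
    have h5 := abs_sub_le (y j) (Q.c j) (TopologicalSpace.denseSeq (RSp n) i j)
    simp only [ccube]
    linarith
  · rw [Cube.volume_eq, Cube.volume_eq, ← mul_pow]
    gcongr
    rw [show (2 : ℝ≥0∞) = ENNReal.ofReal 2 by simp, ← ENNReal.ofReal_mul (by norm_num)]
    apply ENNReal.ofReal_le_ofReal
    simp only [ccube]
    linarith

theorem comparison {n : ℕ} {φ : RSp n → ℝ≥0 → ℝ≥0∞} (hφ : IsWeakPhi Set.univ φ) (p : ℝ) (hp : 1 < p)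
    (L : ℝ≥0) (hL : 1 ≤ L)
    (hinc : ∀ x ∈ (Set.univ : Set (RSp n)), ∀ s t : ℝ≥0, 0 < s → s < t →
    φ x s / (s : ℝ≥0∞) ^ p ≤ (L : ℝ≥0∞) * (φ x t / (t : ℝ≥0∞) ^ p))
    (h0 : A0 Set.univ φ) (h1 : A1 φ)
    (h : RSp n → ℝ≥0) (φi : ℝ≥0 → ℝ≥0∞) (β s : ℝ≥0) (hβ : 0 < β) (hs : 0 < s)
    (hA : ∀ᵐ x ∂(volume : Measure (RSp n)), ∀ t : ℝ≥0,
      (φi t ≤ (s : ℝ≥0∞) → φ x (β * t) ≤ φi t + h x) ∧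
      (φ x t ≤ (s : ℝ≥0∞) → φi (β * t) ≤ φ x t + h x)) (K : ℝ≥0) (hK : 1 ≤ K) :
    ∃ C : ℝ≥0, ∃ P : Set (RSp n), (∀ᵐ x ∂(volume : Measure (RSp n)), x ∈ P) ∧
      ∀ x ∈ P, ∀ z ∈ P, ∀ Q : Cube n, x ∈ Q.set → z ∈ Q.set →
        ∀ V : ℝ≥0, V ≠ 0 → h x ≤ V → h z ≤ V → (V : ℝ≥0∞) ≤ K * (volume Q.set)⁻¹ + K →
        iv φ z V ≤ C * iv φ x V := by
  obtain ⟨b, hb, S, hS⟩ := A1good hφ h1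
  set N : ℝ≥0 := 2 * K * 2 ^ n with hN
  have hN1 : 1 ≤ N := by
    rw [hN]
    calc (1 : ℝ≥0) = 1 * 1 * 1 := by simp
      _ ≤ 2 * K * 2 ^ n := by
        gcongr
        · norm_num
        · exact one_le_pow₀ one_le_two
  obtain ⟨C, P, hP, hC⟩ := bddComp hφ p hp L hL hinc h0 h φi β s hβ hs hA N
  refine ⟨C + (L * (2 * N)) ^ (1 / p) * b⁻¹,
    {x | x ∈ P ∧ ∀ i, volume (ccube n i).set ≤ 1 → x ∈ (ccube n i).set → x ∈ S (ccube n i)}, ?_, ?_⟩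
  · have : ∀ᵐ x ∂(volume : Measure (RSp n)), ∀ i, volume (ccube n i).set ≤ 1 → x ∈ (ccube n i).set → x ∈ S (ccube n i) := by
      rw [ae_all_iff]
      intro i
      by_cases hi : volume (ccube n i).set ≤ 1
      · filter_upwards [(hS _ hi).1] with x hx _ using hx
      · filter_upwards with x hx; exact absurd hx hi
    filter_upwards [hP, this] with x hx hx'
    exact ⟨hx, hx'⟩
  · rintro x ⟨hx, hx'⟩ z ⟨hz, hz'⟩ Q hxQ hzQ V hV0 hxV hzV hV
    obtain ⟨i, hi1, hi2⟩ := exists_ccube Q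
    rw [add_mul]
    by_cases hVN : V ≤ N
    · exact le_trans (hC x hx z hz V hV0 hxV hzV hVN) le_self_add
    push Not at hVN
    refine le_trans ?_ le_add_self
    have hinvle : (volume Q.set)⁻¹ ≤ 2 ^ n * (volume (ccube n i).set)⁻¹ := by
      have := ENNReal.inv_le_inv.2 hi2
      rw [ENNReal.mul_inv (Or.inr Q.volume_ne_top) (Or.inr Q.volume_pos)] at this
      calc (volume Q.set)⁻¹ = (2 ^ n * (2 ^ n)⁻¹) * (volume Q.set)⁻¹ := by
            rw [ENNReal.mul_inv_cancel (by simp) (by finiteness), one_mul]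
        _ = 2 ^ n * ((2 ^ n)⁻¹ * (volume Q.set)⁻¹) := by ring
        _ ≤ _ := by gcongr
    have hvol : volume (ccube n i).set ≤ 1 := by
      by_contra! hc
      have h3 : (volume (ccube n i).set)⁻¹ ≤ 1 := by
        rw [ENNReal.inv_le_one]; exact hc.le
      have : (V : ℝ≥0∞) ≤ N := by
        calc (V : ℝ≥0∞) ≤ K * (volume Q.set)⁻¹ + K := hV
          _ ≤ K * (2 ^ n * 1) + K * (2 ^ n * 1) := by
            gcongr
            · exact hinvle.trans (by gcongr)
            · nth_rewrite 1 [← mul_one (K : ℝ≥0∞)]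
              gcongr
              rw [mul_one]; exact one_le_pow₀ one_le_two
          _ = N := by rw [hN]; push_cast; ring
      exact absurd (ENNReal.coe_le_coe.1 this) (not_le.2 hVN)
    have hW1 : 1 ≤ V / N := by
      rw [one_le_div₀ (lt_of_lt_of_le one_pos hN1)]; exact hVN.le
    have hW2 : ((V / N : ℝ≥0) : ℝ≥0∞) ≤ (volume (ccube n i).set)⁻¹ := by
      have hN0 : N ≠ 0 := (lt_of_lt_of_le one_pos hN1).ne'
      rw [ENNReal.coe_div hN0]
      apply ENNReal.div_le_of_le_mul
      calc (V : ℝ≥0∞) ≤ K * (volume Q.set)⁻¹ + K := hV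
        _ ≤ K * (2 ^ n * (volume (ccube n i).set)⁻¹) + K * (2 ^ n * (volume (ccube n i).set)⁻¹) := by
            gcongr
            nth_rewrite 1 [← mul_one (K : ℝ≥0∞)]
            gcongr
            calc (1 : ℝ≥0∞) = 1 * 1 := by simp
              _ ≤ 2 ^ n * (volume (ccube n i).set)⁻¹ := by
                gcongr
                · exact one_le_pow₀ one_le_two
                · rw [ENNReal.one_le_inv]; exact hvol
        _ = (volume (ccube n i).set)⁻¹ * N := by rw [hN]; push_cast; ring
    obtain ⟨k, hk1, hk2⟩ := exists_nat_pow_near hW1 (one_lt_two (α := ℝ≥0))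
    have e1 := (hS _ hvol).2 x (hx' i hvol (hi1 hxQ)) z (hz' i hvol (hi1 hzQ)) k
      (le_trans (ENNReal.coe_le_coe.2 hk1) hW2)
    have hN0 : 0 < N := lt_of_lt_of_le one_pos hN1
    have e2 : V ≤ 2 * N * 2 ^ k := by
      rw [div_lt_iff₀ hN0] at hk2
      refine hk2.le.trans (le_of_eq ?_)
      ring
    have e3 : 2 ^ k ≤ V := by
      refine hk1.trans ?_
      exact div_le_self zero_le hN1
    calc iv φ z V ≤ iv φ z (2 * N * 2 ^ k) := iv_mono hφ z e2
      _ ≤ (L * (2 * N)) ^ (1 / p) * iv φ z (2 ^ k) := iv_scale hφ p hp L hL hinc z _ _ (by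
          calc (1 : ℝ≥0) = 1 * 1 := by simp
            _ ≤ 2 * N := by gcongr; exact one_le_two)
      _ = (L * (2 * N)) ^ (1 / p) * (b⁻¹ * (b * iv φ z (2 ^ k))) := by field_simp
      _ ≤ (L * (2 * N)) ^ (1 / p) * (b⁻¹ * iv φ x V) := by
          gcongr; exact e1.trans (iv_mono hφ x e3)
      _ = _ := by ring

end CMP


noncomputable section FIN

theorem bracket (a θ : ℝ) (hθ : a ≤ θ) (w hz hx U : ℝ≥0) (hw : 0 < w) :
    (U / (w + hz)) ^ θ * ((w + hz) ^ a * ((w + hz + hx) ^ a)⁻¹) *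
      (((w + hz + hx) / (w + hx)) ^ θ * (w + hx) ^ a) ≤ (U / w) ^ θ * w ^ a := by
  obtain ⟨e, he⟩ : ∃ e, e = θ - a := ⟨_, rfl⟩
  have he0 : 0 ≤ e := by rw [he]; linarith
  have hθe : θ = a + e := by rw [he]; ring
  have h1 : 0 < w + hz := lt_of_lt_of_le hw le_self_add
  have h2 : 0 < w + hz + hx := lt_of_lt_of_le h1 le_self_add
  have h3 : 0 < w + hx := lt_of_lt_of_le hw le_self_add
  have key : ((w + hz + hx) / ((w + hz) * (w + hx))) ^ e ≤ (1 / w) ^ e := by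
    apply NNReal.rpow_le_rpow _ he0
    rw [div_le_div_iff₀ (by positivity) hw, one_mul]
    calc (w + hz + hx) * w ≤ (w + hz + hx) * w + hz * hx := le_self_add
      _ = _ := by ring
  generalize w + hz = A at *
  generalize A + hx = V at *
  generalize w + hx = B at *
  have e1 : (U / A) ^ θ * (A ^ a * (V ^ a)⁻¹) * ((V / B) ^ θ * B ^ a) = U ^ θ * (V / (A * B)) ^ e := by
    have x1 : A ^ θ = A ^ a * A ^ e := by rw [hθe, NNReal.rpow_add h1.ne']
    have x2 : V ^ θ = V ^ a * V ^ e := by rw [hθe, NNReal.rpow_add h2.ne']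
    have x3 : B ^ θ = B ^ a * B ^ e := by rw [hθe, NNReal.rpow_add h3.ne']
    rw [NNReal.div_rpow, NNReal.div_rpow, NNReal.div_rpow, NNReal.mul_rpow, x1, x2, x3]
    have y1 : A ^ a ≠ 0 := by positivity
    have y2 : A ^ e ≠ 0 := by positivity
    have y3 : B ^ a ≠ 0 := by positivity
    have y4 : B ^ e ≠ 0 := by positivity
    have y5 : V ^ a ≠ 0 := by positivity
    field_simp
  have e2 : (U / w) ^ θ * w ^ a = U ^ θ * (1 / w) ^ e := by
    have x1 : w ^ θ = w ^ a * w ^ e := by rw [hθe, NNReal.rpow_add hw.ne']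
    rw [NNReal.div_rpow, NNReal.div_rpow, x1, NNReal.one_rpow]
    have y1 : w ^ a ≠ 0 := by positivity
    have y2 : w ^ e ≠ 0 := by positivity
    field_simp
  rw [e1, e2]
  gcongr

theorem pointwise {n : ℕ} {φ ψ : RSp n → ℝ≥0 → ℝ≥0∞} (hφ : IsWeakPhi Set.univ φ)
    (hψ : IsWeakPhi Set.univ ψ) (p : ℝ) (hp : 1 < p)
    (L : ℝ≥0) (hL : 1 ≤ L)
    (hinc : ∀ x ∈ (Set.univ : Set (RSp n)), ∀ s t : ℝ≥0, 0 < s → s < t →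
    φ x s / (s : ℝ≥0∞) ^ p ≤ (L : ℝ≥0∞) * (φ x t / (t : ℝ≥0∞) ^ p))
    (a : ℝ) (hap : a ≤ 1 / p) (c₁ c₂ C : ℝ≥0) (hc₁ : 0 < c₁)
    (hrel : ∀ x : RSp n, ∀ t : ℝ≥0, 0 < t →
      c₁ * (t ^ a * iv ψ x t) ≤ iv φ x t ∧ iv φ x t ≤ c₂ * (t ^ a * iv ψ x t))
    (x z : RSp n) (w hz hx u f0 : ℝ≥0) (hw : 0 < w) (hf : φ z f0 = u)
    (hcmp : iv φ z (w + hz + hx) ≤ C * iv φ x (w + hz + hx)) :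
    f0 ≤ (L * 2) ^ (1 / p) * (c₂ * c₁⁻¹) * C * L ^ (1 / p) * c₂ *
      (w ^ a * iv ψ x (w + hx) * (1 + (u + hz) ^ (1 / p) / w ^ (1 / p))) := by
  have hθ : 0 < 1 / p := by positivity
  have hθ1 : 1 / p ≤ 1 := by rw [div_le_one (by linarith)]; exact hp.le
  have hcmb := bracket a (1 / p) hap w hz hx (w + hz + u) hw
  set θ := 1 / p with hθdef
  have h1 : 0 < w + hz := lt_of_lt_of_le hw le_self_add
  have h2 : 0 < w + hz + hx := lt_of_lt_of_le h1 le_self_add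
  have h3 : 0 < w + hx := lt_of_lt_of_le hw le_self_add
  have hvV : w + hx ≤ w + hz + hx := by gcongr; exact le_self_add
  set A := w + hz with hA
  set V := A + hx with hV
  set B := w + hx with hB
  set U := A + u with hU
  have s1 : f0 ≤ (L * 2) ^ θ * (U / A) ^ θ * iv φ z A := by
    have t1 : f0 ≤ iv φ z (2 * U) := by
      apply le_iv hφ
      rw [hf, ENNReal.coe_lt_coe]
      have : u ≤ U := le_add_self
      have hU0 : 0 < U := lt_of_lt_of_le h1 le_self_add
      calc u ≤ U := this
        _ < 2 * U := lt_mul_of_one_lt_left hU0 one_lt_two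
    have t2 : 2 * U = (2 * U / A) * A := by field_simp
    have t3 : 1 ≤ 2 * U / A := by
      rw [one_le_div₀ h1]
      calc A ≤ U := le_self_add
        _ ≤ 2 * U := le_mul_of_one_le_left zero_le one_le_two
    calc f0 ≤ iv φ z (2 * U) := t1
      _ = iv φ z ((2 * U / A) * A) := by rw [← t2]
      _ ≤ (L * (2 * U / A)) ^ θ * iv φ z A := iv_scale hφ p hp L hL hinc z _ _ t3
      _ = _ := by
        rw [show L * (2 * U / A) = (L * 2) * (U / A) by ring, NNReal.mul_rpow]
  have s2 : iv φ z A ≤ (c₂ * c₁⁻¹) * (A ^ a * (V ^ a)⁻¹) * iv φ z V := by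
    have hVa : V ^ a ≠ 0 := by positivity
    calc iv φ z A ≤ c₂ * (A ^ a * iv ψ z A) := (hrel z A h1).2
      _ ≤ c₂ * (A ^ a * iv ψ z V) := by
          gcongr; exact iv_mono hψ z le_self_add
      _ = (c₂ * c₁⁻¹) * (A ^ a * (V ^ a)⁻¹) * (c₁ * (V ^ a * iv ψ z V)) := by
          field_simp
      _ ≤ _ := by gcongr; exact (hrel z V h2).1
  have s3 : iv φ x V ≤ L ^ θ * c₂ * ((V / B) ^ θ * B ^ a) * iv ψ x B := by
    have t2 : V = (V / B) * B := by field_simp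
    calc iv φ x V = iv φ x ((V / B) * B) := by rw [← t2]
      _ ≤ (L * (V / B)) ^ θ * iv φ x B := iv_scale hφ p hp L hL hinc x _ _ (by
          rw [one_le_div₀ h3]; exact hvV)
      _ ≤ (L * (V / B)) ^ θ * (c₂ * (B ^ a * iv ψ x B)) := by gcongr; exact (hrel x B h3).2
      _ = _ := by rw [NNReal.mul_rpow]; ring
  have s4 : (U / w) ^ θ ≤ 1 + (u + hz) ^ θ / w ^ θ := by
    have : U / w = 1 + (u + hz) / w := by rw [hU, hA]; field_simp; ring
    rw [this, ← NNReal.div_rpow]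
    have := NNReal.rpow_add_le_add_rpow 1 ((u + hz) / w) hθ.le hθ1
    simpa using this
  calc f0 ≤ (L * 2) ^ θ * (U / A) ^ θ * ((c₂ * c₁⁻¹) * (A ^ a * (V ^ a)⁻¹) *
        (C * (L ^ θ * c₂ * ((V / B) ^ θ * B ^ a) * iv ψ x B))) := by
        refine s1.trans ?_
        gcongr
        refine s2.trans ?_
        gcongr
        refine hcmp.trans ?_
        gcongr
    _ = (L * 2) ^ θ * (c₂ * c₁⁻¹) * C * L ^ θ * c₂ *
        (((U / A) ^ θ * (A ^ a * (V ^ a)⁻¹) * ((V / B) ^ θ * B ^ a)) * iv ψ x B) := by ring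
    _ ≤ (L * 2) ^ θ * (c₂ * c₁⁻¹) * C * L ^ θ * c₂ *
        (((1 + (u + hz) ^ θ / w ^ θ) * w ^ a) * iv ψ x B) := by
        exact mul_le_mul' le_rfl (mul_le_mul' (hcmb.trans (mul_le_mul' s4 le_rfl)) le_rfl)
    _ = _ := by ring

theorem jensen {n : ℕ} (p : ℝ) (hp : 1 < p) (Q : Cube n) (F : RSp n → ℝ≥0∞) (hF : Measurable F) :
    ((volume Q.set)⁻¹ * ∫⁻ y in Q.set, F y ^ (1 / p)) ^ p * volume Q.set ≤ ∫⁻ y in Q.set, F y := by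
  have hp0 : 0 < p := by linarith
  have hpq := Real.HolderConjugate.conjExponent hp
  have h := ENNReal.lintegral_mul_le_Lp_mul_Lq (volume.restrict Q.set) hpq
    (f := fun y => F y ^ (1 / p)) (g := fun _ => 1) (by fun_prop) (by fun_prop)
  simp only [Pi.mul_apply, mul_one, ← ENNReal.rpow_mul, one_div_mul_cancel hp0.ne', ENNReal.rpow_one,
    ENNReal.one_rpow, lintegral_const, Measure.restrict_apply_univ, one_mul] at h
  set v := volume Q.set with hv
  have hv0 : v ≠ 0 := Q.volume_pos
  have hvt : v ≠ ∞ := Q.volume_ne_top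
  calc (v⁻¹ * ∫⁻ y in Q.set, F y ^ (1 / p)) ^ p * v
      ≤ (v⁻¹ * ((∫⁻ y in Q.set, F y) ^ (1 / p) * v ^ (1 / p.conjExponent))) ^ p * v := by gcongr
    _ = (∫⁻ y in Q.set, F y) * ((v⁻¹) ^ p * (v ^ (1 / p.conjExponent)) ^ p * v) := by
        rw [ENNReal.mul_rpow_of_nonneg _ _ hp0.le, ENNReal.mul_rpow_of_nonneg _ _ hp0.le,
          ← ENNReal.rpow_mul, one_div_mul_cancel hp0.ne', ENNReal.rpow_one]
        ring
    _ = (∫⁻ y in Q.set, F y) * 1 := by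
        congr 1
        rw [← ENNReal.rpow_mul, ENNReal.inv_rpow, ← ENNReal.rpow_neg, ← ENNReal.rpow_add _ _ hv0 hvt]
        nth_rewrite 2 [← ENNReal.rpow_one v]
        rw [← ENNReal.rpow_add _ _ hv0 hvt]
        have : -p + 1 / p.conjExponent * p + 1 = 0 := by
          have h1 : 1 / p.conjExponent = 1 - 1 / p := by
            have := hpq.inv_add_inv_eq_one
            rw [one_div, one_div]; linarith
          rw [h1]; field_simp; ring
        rw [this, ENNReal.rpow_zero]
    _ = _ := mul_one _

end FIN

noncomputable section LAST

theorem cube_est {n : ℕ} (p : ℝ) (hp : 1 < p) (a : ℝ) (ha : 0 ≤ a) (Q : Cube n)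
    (f0 : RSp n → ℝ≥0) (F : RSp n → ℝ≥0∞) (hF : Measurable F) (hF0 : ∀ y, F y ≠ 0)
    (K : ℝ≥0) (hK : ∫⁻ y in Q.set, F y ≤ K) (Bnd : ℝ≥0 → ℝ≥0) (D : ℝ≥0)
    (hpt : ∀ w : ℝ≥0, 0 < w → (w : ℝ≥0∞) ≤ K * (volume Q.set)⁻¹ →
      ∀ᵐ z ∂(volume.restrict Q.set), (f0 z : ℝ≥0∞) ≤
        D * ((w : ℝ≥0∞) ^ a * Bnd w * (1 + F z ^ (1 / p) / (w : ℝ≥0∞) ^ (1 / p)))) :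
    ∃ w : ℝ≥0, (w : ℝ≥0∞) = ((volume Q.set)⁻¹ * ∫⁻ y in Q.set, F y ^ (1 / p)) ^ p ∧
      volume Q.set ^ (a - 1) * ∫⁻ y in Q.set, (f0 y : ℝ≥0∞) ≤ 2 * D * (K : ℝ≥0∞) ^ a * Bnd w := by
  have hp0 : 0 < p := by linarith
  have hj := (jensen p hp Q F hF).trans hK
  have hv0 : volume Q.set ≠ 0 := Q.volume_pos
  have hvt : volume Q.set ≠ ∞ := Q.volume_ne_top
  have hI0 : ∫⁻ y in Q.set, F y ^ (1 / p) ≠ 0 := by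
    intro h
    rw [lintegral_eq_zero_iff (by fun_prop)] at h
    have h2 : ∀ᵐ y ∂(volume.restrict Q.set), False := by
      filter_upwards [h] with y hy
      have := hF0 y
      simp [ENNReal.rpow_eq_zero_iff] at hy
      rcases hy with hy | hy
      · exact this hy.1
      · linarith
    simp at h2
    exact hv0 h2
  set v := volume Q.set with hv
  set I := ∫⁻ y in Q.set, F y ^ (1 / p) with hI
  set m := v⁻¹ * I with hm
  have hm0 : m ≠ 0 := by
    rw [hm]; exact mul_ne_zero (by simpa using hvt) hI0
  have hmp : m ^ p ≤ K * v⁻¹ := by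
    rw [← div_eq_mul_inv, ENNReal.le_div_iff_mul_le (Or.inl hv0) (Or.inl hvt)]
    exact hj
  have hmpt : m ^ p ≠ ∞ := ne_top_of_le_ne_top (ENNReal.mul_ne_top (by simp) (by simpa using hv0)) hmp
  have hmt : m ≠ ∞ := by
    intro h; rw [h, ENNReal.top_rpow_of_pos hp0] at hmpt; exact hmpt rfl
  have hmp0 : m ^ p ≠ 0 := by
    simp [ENNReal.rpow_eq_zero_iff, hm0, hmt]
  obtain ⟨w, hw⟩ : ∃ w : ℝ≥0, (w : ℝ≥0∞) = m ^ p := ⟨_, ENNReal.coe_toNNReal hmpt⟩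
  have hw0 : 0 < w := by
    rw [pos_iff_ne_zero]; rintro rfl; exact hmp0 (by rw [← hw]; simp)
  have hwr : (w : ℝ≥0∞) ^ (1 / p) = m := by
    rw [hw, ← ENNReal.rpow_mul, mul_one_div_cancel hp0.ne', ENNReal.rpow_one]
  have hh := hpt w hw0 (hw ▸ hmp)
  rw [hwr] at hh
  refine ⟨w, hw, ?_⟩
  have e1 : ∫⁻ y in Q.set, (1 + F y ^ (1 / p) / m) = 2 * v := by
    rw [lintegral_add_left (by fun_prop)]
    simp only [lintegral_const, Measure.restrict_apply_univ, one_mul, div_eq_mul_inv]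
    rw [lintegral_mul_const _ (by fun_prop), ← one_div, ← hI, ← hv, two_mul]
    congr 1
    have : I = v * m := by rw [hm, ← mul_assoc, ENNReal.mul_inv_cancel hv0 hvt, one_mul]
    rw [this, mul_assoc, ENNReal.mul_inv_cancel hm0 hmt, mul_one]
  have hwv : (w : ℝ≥0∞) * v ≤ K := by rw [hw]; exact hj
  calc v ^ (a - 1) * ∫⁻ y in Q.set, (f0 y : ℝ≥0∞)
      ≤ v ^ (a - 1) * ∫⁻ y in Q.set, D * ((w : ℝ≥0∞) ^ a * Bnd w * (1 + F y ^ (1 / p) / m)) := by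
        exact mul_le_mul' le_rfl (lintegral_mono_ae hh)
    _ = v ^ (a - 1) * (D * ((w : ℝ≥0∞) ^ a * Bnd w * (2 * v))) := by
        rw [lintegral_const_mul _ (by fun_prop), lintegral_const_mul _ (by fun_prop), e1]
    _ = 2 * D * ((w : ℝ≥0∞) ^ a * (v ^ (a - 1) * v ^ (1 : ℝ))) * Bnd w := by
        rw [ENNReal.rpow_one]; ring
    _ = 2 * D * ((w : ℝ≥0∞) * v) ^ a * Bnd w := by
        rw [← ENNReal.rpow_add _ _ hv0 hvt, sub_add_cancel, ENNReal.mul_rpow_of_nonneg _ _ ha]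
    _ ≤ _ := by gcongr

theorem norm_bound {n : ℕ} {ψ : RSp n → ℝ≥0 → ℝ≥0∞} (hψ : IsWeakPhi Set.univ ψ)
    (L : ℝ≥0) (hL : 1 ≤ L) (hinc : ∀ x ∈ (Set.univ : Set (RSp n)), ∀ s t : ℝ≥0, 0 < s → s < t →
    ψ x s / (s : ℝ≥0∞) ≤ (L : ℝ≥0∞) * (ψ x t / (t : ℝ≥0∞)))
    (T G : RSp n → ℝ≥0∞) (N : ℝ≥0) (hN : 2 ≤ N) (hG : ∫⁻ x, G x ≤ N) (D : ℝ≥0) (hD : 0 < D)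
    (hT : ∀ᵐ x ∂(volume : Measure (RSp n)), G x ≠ ∞ ∧ T x ≤ D * iv ψ x (G x).toNNReal) :
    orliczNormE ψ Set.univ T ≤ ((D * (2 * (L * N)) : ℝ≥0) : ℝ≥0∞) := by
  set R := L * N with hR
  have hL0 : 0 < L := lt_of_lt_of_le one_pos hL
  have hN0 : 0 < N := lt_of_lt_of_le two_pos hN
  have hR0 : 0 < R := mul_pos hL0 hN0
  have hR1 : 1 < R := by
    calc (1 : ℝ≥0) < 2 := one_lt_two
      _ ≤ N := hN
      _ = 1 * N := (one_mul N).symm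
      _ ≤ R := mul_le_mul' hL le_rfl
  refine sInf_le ⟨_, ⟨by positivity, ?_⟩, rfl⟩
  rw [Measure.restrict_univ]
  have key : ∀ᵐ x ∂(volume : Measure (RSp n)),
      phiE ψ x (T x / ((D * (2 * R) : ℝ≥0) : ℝ≥0∞)) ≤ (N : ℝ≥0∞)⁻¹ * G x := by
    filter_upwards [hT] with x ⟨hx, hTx⟩
    refine iSup₂_le fun s hs => ?_
    by_cases hs0 : s = 0
    · rw [hs0, hψ.zero x (mem_univ x)]; exact bot_le
    have hs0' : 0 < s := pos_iff_ne_zero.2 hs0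
    have h1 : s * (D * (2 * R)) ≤ D * iv ψ x (G x).toNNReal := by
      have h2 : (s : ℝ≥0∞) * ((D * (2 * R) : ℝ≥0) : ℝ≥0∞) ≤ T x := by
        rw [ENNReal.le_div_iff_mul_le] at hs
        · exact hs
        · left; exact_mod_cast (by positivity : D * (2 * R) ≠ 0)
        · left; exact ENNReal.coe_ne_top
      exact_mod_cast h2.trans hTx
    have h3 : 2 * (s * R) ≤ iv ψ x (G x).toNNReal := by
      refine le_of_mul_le_mul_left (le_trans (le_of_eq ?_) h1) hD
      ring
    have h4 : s * R < iv ψ x (G x).toNNReal := by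
      refine lt_of_lt_of_le ?_ h3
      have : 0 < s * R := by positivity
      rw [two_mul]; exact lt_add_of_pos_left _ this
    have h5 := (lt_of_lt_iv hψ x _ _ h4).le
    rw [ENNReal.coe_toNNReal hx] at h5
    have h6 := hinc x (mem_univ x) s (s * R) hs0' (by
      calc s = s * 1 := (mul_one s).symm
        _ < s * R := by gcongr)
    rw [ENNReal.div_le_iff (by exact_mod_cast hs0) (by simp)] at h6
    refine h6.trans ?_
    calc (L : ℝ≥0∞) * (ψ x (s * R) / ((s * R : ℝ≥0) : ℝ≥0∞)) * s
        ≤ (L : ℝ≥0∞) * (G x / ((s * R : ℝ≥0) : ℝ≥0∞)) * s := by gcongr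
      _ = ((L * (s * R)⁻¹ * s : ℝ≥0) : ℝ≥0∞) * G x := by
        rw [div_eq_mul_inv, ← ENNReal.coe_inv (by positivity)]
        push_cast; ring
      _ = ((N⁻¹ : ℝ≥0) : ℝ≥0∞) * G x := by
        congr 2
        rw [hR]; field_simp
      _ = _ := by rw [ENNReal.coe_inv hN0.ne']
  calc _ ≤ ∫⁻ x, (N : ℝ≥0∞)⁻¹ * G x := lintegral_mono_ae key
    _ = (N : ℝ≥0∞)⁻¹ * ∫⁻ x, G x := lintegral_const_mul' _ _ (by simpa using hN0.ne')
    _ ≤ (N : ℝ≥0∞)⁻¹ * N := by gcongr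
    _ ≤ 1 := ENNReal.inv_mul_le_one _

end LAST

/-- boundedness of the fractional maximal operator
`M_α : L^φ(ℝⁿ) → L^ψ(ℝⁿ)` under the fractional assumptions. -/
theorem statement6 {n : ℕ} (hn : 0 < n) (p q α r : ℝ)
    (φ ψ : RSp n → ℝ≥0 → ℝ≥0∞)
    (hp : 1 < p) (hpq : p ≤ q) (hα : α / (n : ℝ) = 1 / p - 1 / q)
    (hφ : IsWeakPhi Set.univ φ) (hψ : IsWeakPhi Set.univ ψ)
    (hinv : FracInvRel α φ ψ)
    (hr₁ : α / (n : ℝ) < r) (hr₂ : r ≤ 1 / p)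
    (ha0 : A0 Set.univ φ) (ha1 : A1 φ) (ha2 : A2 φ)
    (hainc : AInc p Set.univ φ) (hadec : ADec (1 / r) Set.univ φ) :
    ∃ C : ℝ≥0, ∀ f : RSp n → ℝ, MemOrlicz φ Set.univ f →
      orliczNormE ψ Set.univ (fracMaximal α f) ≤
        (C : ℝ≥0∞) * orliczNorm φ Set.univ f := by
  have hp0 : 0 < p := by linarith
  have hq0 : 0 < q := by linarith
  obtain ⟨a, ha⟩ : ∃ a, a = α / (n : ℝ) := ⟨_, rfl⟩
  have ha0' : 0 ≤ a := by
    rw [ha, hα]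
    have := one_div_le_one_div_of_le hp0 hpq
    linarith
  have hap : a ≤ 1 / p := by
    rw [ha, hα]
    have : 0 < 1 / q := by positivity
    linarith
  obtain ⟨c₁, c₂, hc₁, hrel0⟩ := hinv
  have hrel : ∀ x : RSp n, ∀ t : ℝ≥0, 0 < t →
      c₁ * (t ^ a * iv ψ x t) ≤ iv φ x t ∧ iv φ x t ≤ c₂ * (t ^ a * iv ψ x t) := by
    intro x t ht
    have := hrel0 x t ht
    rw [← coe_iv hφ, ← coe_iv hψ, ← ha, ← ENNReal.coe_rpow_of_nonneg _ ha0'] at this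
    exact_mod_cast this
  obtain ⟨L, hL, hinc⟩ := hainc
  obtain ⟨Lψ, hLψ, hincψ⟩ := hψ.almost_inc
  obtain ⟨h, hhm, hhpos, ⟨M, hM⟩, hhint, φi, β, s, hβ, hs, hA⟩ := A2meas hφ ha2
  obtain ⟨H, hH⟩ : ∃ H : ℝ≥0, (H : ℝ≥0∞) = ∫⁻ x, (h x : ℝ≥0∞) := ⟨_, ENNReal.coe_toNNReal hhint⟩
  set K : ℝ≥0 := 1 + H + (M + M) with hK
  have hK1 : 1 ≤ K := by rw [hK, add_assoc]; exact le_self_add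
  have hKH : 1 + H ≤ K := le_self_add
  have hKM : M + M ≤ K := le_add_self
  obtain ⟨C, P, hP, hcomp⟩ := comparison hφ p hp L hL hinc ha0 ha1 h φi β s hβ hs hA K hK1
  obtain ⟨CN, hCN, hNM⟩ := NM_strong hn p hp
  lift CN to ℝ≥0 using hCN
  set D1 : ℝ≥0 := (L * 2) ^ (1 / p) * (c₂ * c₁⁻¹) * C * L ^ (1 / p) * c₂ with hD1
  set D2 : ℝ≥0 := 2 * D1 * K ^ a + 1 with hD2
  have hD2pos : 0 < D2 := by rw [hD2]; positivity
  set N : ℝ≥0 := 2 + (CN * K + K) with hN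
  have hN2 : 2 ≤ N := le_self_add
  have main : ∀ f : RSp n → ℝ, AEMeasurable f volume → ∀ lam : ℝ≥0, 0 < lam →
      ∫⁻ x, φ x (‖f x‖₊ / lam) ≤ 1 →
      orliczNormE ψ Set.univ (fracMaximal α f) ≤ ((D2 * lam * (2 * (Lψ * N)) : ℝ≥0) : ℝ≥0∞) := by
    intro f hf lam hlam hmod
    have hu : AEMeasurable (fun x => φ x (‖f x‖₊ / lam)) volume := by
      have h1 := hφ.meas (fun x => ‖hf.mk f x‖₊ / lam) (by
        have := hf.measurable_mk; fun_prop)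
      rw [Measure.restrict_univ] at h1
      refine h1.congr ?_
      filter_upwards [hf.ae_eq_mk] with x hx
      rw [hx]
    set F0 := hu.mk _ with hF0
    have hF0m : Measurable F0 := hu.measurable_mk
    have hF0i : ∫⁻ x, F0 x ≤ 1 := by
      rw [← lintegral_congr_ae hu.ae_eq_mk]; exact hmod
    have hF0t : ∀ᵐ x, F0 x < ∞ :=
      ae_lt_top hF0m (ne_top_of_le_ne_top ENNReal.one_ne_top hF0i)
    set F : RSp n → ℝ≥0∞ := fun x => F0 x + h x with hF
    have hFm : Measurable F := hF0m.add hhm.coe_nnreal_ennreal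
    have hFpos : ∀ y, F y ≠ 0 := by
      intro y hy
      have := hhpos y
      simp [hF] at hy
      exact this.ne' hy.2
    have hFi : ∫⁻ x, F x ≤ K := by
      rw [hF, lintegral_add_left hF0m, ← hH]
      calc _ ≤ (1 : ℝ≥0∞) + H := by gcongr
        _ ≤ K := by exact_mod_cast hKH
    set g : RSp n → ℝ≥0∞ := fun x => F x ^ (1 / p) with hg
    have hgm : Measurable g := by rw [hg]; fun_prop
    have hgp : ∀ x, g x ^ p = F x := fun x => by
      rw [hg]; simp only []; rw [← ENNReal.rpow_mul, one_div_mul_cancel hp0.ne', ENNReal.rpow_one]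
    set G : RSp n → ℝ≥0∞ := fun x => NM g x ^ p + h x with hG
    have hGm : Measurable G := by
      have := NM_measurable g
      rw [hG]; fun_prop
    have hGi : ∫⁻ x, G x ≤ ((CN * K + K : ℝ≥0) : ℝ≥0∞) := by
      rw [hG, lintegral_add_left (by have := NM_measurable g; fun_prop), ← hH]
      have h1 := hNM g hgm
      simp only [hgp] at h1
      push_cast
      refine add_le_add (h1.trans (by gcongr)) ?_
      exact_mod_cast le_trans le_add_self hKH
    have hGt : ∀ᵐ x, G x < ∞ := ae_lt_top hGm (ne_top_of_le_ne_top ENNReal.coe_ne_top hGi)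
    have hGi2 : ∫⁻ x, G x ≤ N := hGi.trans (by exact_mod_cast le_add_self)
    refine norm_bound hψ Lψ hLψ hincψ (fracMaximal α f) G N hN2 hGi2 (D2 * lam)
      (mul_pos hD2pos hlam) ?_
    filter_upwards [hP, hGt] with x hxP hxG
    refine ⟨hxG.ne, ?_⟩
    refine iSup₂_le fun Q hxQ => ?_
    rw [← ha]
    have hFQ : ∫⁻ y in Q.set, F y ≤ K := (setLIntegral_le_lintegral _ _).trans hFi
    obtain ⟨w, hw, hwb⟩ := cube_est p hp a ha0' Q (fun z => ‖f z‖₊ / lam) F hFm hFpos K hFQ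
      (fun w => iv ψ x (w + h x)) D1 (by
        intro w hw0 hwK
        have t1 := ae_restrict_of_ae (s := Q.set) hP
        have t2 := ae_restrict_of_ae (s := Q.set) hu.ae_eq_mk
        have t3 := ae_restrict_of_ae (s := Q.set) hF0t
        filter_upwards [t1, t2, t3, ae_restrict_mem Q.measurable] with z hzP hzu hzt hzQ
        have hcmp := hcomp x hxP z hzP Q hxQ hzQ (w + h z + h x)
          (by rw [add_assoc]; exact (lt_of_lt_of_le hw0 le_self_add).ne') le_add_self
          (by rw [add_right_comm]; exact le_add_self) (by
            rw [add_assoc]; push_cast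
            refine add_le_add hwK ?_
            exact_mod_cast le_trans (add_le_add (hM z) (hM x)) hKM)
        obtain ⟨u, hu'⟩ : ∃ u : ℝ≥0, (u : ℝ≥0∞) = F0 z := ⟨_, ENNReal.coe_toNNReal hzt.ne⟩
        have hpw := pointwise hφ hψ p hp L hL hinc a hap c₁ c₂ C hc₁ hrel x z w (h z) (h x) u
          (‖f z‖₊ / lam) hw0 (by rw [hu']; exact hzu) hcmp
        rw [← hD1, ← ENNReal.coe_le_coe] at hpw
        refine hpw.trans (le_of_eq ?_)
        have hip : 0 ≤ 1 / p := by positivity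
        rw [hF]
        simp only []
        rw [← hu', ← ENNReal.coe_add, ← ENNReal.coe_rpow_of_nonneg _ hip,
          ← ENNReal.coe_rpow_of_nonneg _ hip, ← ENNReal.coe_rpow_of_nonneg _ ha0',
          ← ENNReal.coe_div (by positivity)]
        push_cast
        rfl)
    have hwG : w + h x ≤ (G x).toNNReal := by
      rw [← ENNReal.coe_le_coe, ENNReal.coe_toNNReal hxG.ne]
      push_cast
      rw [hw]
      exact add_le_add (ENNReal.rpow_le_rpow (le_NM g Q x hxQ) hp0.le) le_rfl
    have e1 : ∫⁻ y in Q.set, (‖f y‖₊ : ℝ≥0∞) = lam * ∫⁻ y in Q.set, ((‖f y‖₊ / lam : ℝ≥0) : ℝ≥0∞) := by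
      rw [← lintegral_const_mul' _ _ ENNReal.coe_ne_top]
      refine lintegral_congr fun y => ?_
      rw [← ENNReal.coe_mul, mul_div_cancel₀ _ hlam.ne']
    calc volume Q.set ^ (a - 1) * ∫⁻ y in Q.set, (‖f y‖₊ : ℝ≥0∞)
        = lam * (volume Q.set ^ (a - 1) * ∫⁻ y in Q.set, ((‖f y‖₊ / lam : ℝ≥0) : ℝ≥0∞)) := by
          rw [e1]; ring
      _ ≤ lam * (2 * D1 * (K : ℝ≥0∞) ^ a * iv ψ x (w + h x)) := by gcongr
      _ = ((lam * (2 * D1 * K ^ a * iv ψ x (w + h x)) : ℝ≥0) : ℝ≥0∞) := by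
          rw [← ENNReal.coe_rpow_of_nonneg _ ha0']; push_cast; rfl
      _ ≤ ((D2 * lam * iv ψ x (G x).toNNReal : ℝ≥0) : ℝ≥0∞) := by
          rw [ENNReal.coe_le_coe]
          calc lam * (2 * D1 * K ^ a * iv ψ x (w + h x)) ≤ lam * (D2 * iv ψ x (G x).toNNReal) := by
                refine mul_le_mul' le_rfl (mul_le_mul' le_self_add (iv_mono hψ x hwG))
            _ = _ := by ring
      _ = _ := by push_cast; rfl
  set C0 : ℝ≥0 := D2 * (2 * (Lψ * N)) with hC0
  have hC0pos : 0 < C0 := by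
    have : 0 < Lψ := lt_of_lt_of_le one_pos hLψ
    have : 0 < N := lt_of_lt_of_le two_pos hN2
    rw [hC0]; positivity
  refine ⟨C0, fun f hf => ?_⟩
  have hfm := hf.1
  rw [Measure.restrict_univ] at hfm
  rw [mul_comm, ← ENNReal.div_le_iff (by exact_mod_cast hC0pos.ne') ENNReal.coe_ne_top]
  refine le_sInf ?_
  rintro _ ⟨lam, ⟨hlam, hmod⟩, rfl⟩
  rw [Measure.restrict_univ] at hmod
  rw [ENNReal.div_le_iff (by exact_mod_cast hC0pos.ne') ENNReal.coe_ne_top]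
  refine (main f hfm lam hlam hmod).trans (le_of_eq ?_)
  rw [hC0]
  push_cast
  ring
end
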